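/- Let ρ be a quasi-periodic labelling, and let f, g ∈ G_ρ be elements for which there exists a nonempty open interval I ⊂ ℝ pointwise fixed by both f and g. Then there is a subgroup A ≤ G_ρ containing both f and g that is isomorphic to a direct sum of finitely many copies of F', the commutator subgroup of Thompson's group F. -/

import Mathlib

/-! ### Letters, labellings and quasi-periodicity -/

/-- The four letters `a, b, a⁻¹, b⁻¹`. -/
inductive Letter : Type
  | a : Letter
  | b : Letter
  | A : Letter  -- `a⁻¹`
  | B : Letter  -- `b⁻¹`
  deriving DecidableEq

/-- The formal inverse of a letter. -/
def Letter.inv : Letter → Letter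
  | .a => .A
  | .A => .a
  | .b => .B
  | .B => .b

/-- We encode the set of half-integers `½ℤ` by `ℤ` via `m ↦ m / 2`; integer points
correspond to even indices and proper half-integer points to odd indices.
A labelling assigns `a^{±1}` to integer points and `b^{±1}` to half-integer points. -/
def IsLabelling (ρ : ℤ → Letter) : Prop :=
  ∀ m : ℤ, (Even m → ρ m = Letter.a ∨ ρ m = Letter.A) ∧
    (Odd m → ρ m = Letter.b ∨ ρ m = Letter.B)

/-- The word of the labelling `ρ` along the block `{k, k+1, …, k+n}` (in the
half-integer encoding, the block of size `n+1` starting at `k/2`). -/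
def blockWord (ρ : ℤ → Letter) (k : ℤ) (n : ℕ) : List Letter :=
  (List.range (n + 1)).map fun i => ρ (k + i)

/-- The formal inverse of a word: reverse the word and invert each letter. -/
def wordInv (w : List Letter) : List Letter :=
  (w.map Letter.inv).reverse

/-- A labelling is quasi-periodic if (1) every subword of the labelling appears as a
subword (string of consecutive letters) of every sufficiently large block, and (2) the
formal inverse of every subword of the labelling is again a subword of the labelling. -/
def IsQuasiPeriodic (ρ : ℤ → Letter) : Prop :=
  IsLabelling ρ ∧
    (∀ (k : ℤ) (n : ℕ), ∃ N : ℕ, ∀ (k' : ℤ) (n' : ℕ), N ≤ n' + 1 →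
      (blockWord ρ k n) <:+: (blockWord ρ k' n')) ∧
    (∀ (k : ℤ) (n : ℕ), ∃ k' : ℤ, blockWord ρ k' n = wordInv (blockWord ρ k n))

/-! ### Thompson's group `F` and the subgroup `H`

Orientation-preserving homeomorphisms of `[0,1]` are realised as order-automorphisms
of `ℝ` that are the identity outside `[0,1]`; orientation-preserving homeomorphisms of
the line are order-automorphisms of `ℝ`. -/

/-- A dyadic rational real number, i.e. an element of `ℤ[1/2]`. -/
def IsDyadic (x : ℝ) : Prop :=
  ∃ (a : ℤ) (b : ℕ), x = (a : ℝ) / 2 ^ b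

/-- Membership in Thompson's group `F`: the identity outside `[0,1]`, and on `[0,1]`
piecewise linear with breakpoints in `ℤ[1/2]` and slopes integer powers of `2`. -/
def InThompsonF (f : ℝ ≃o ℝ) : Prop :=
  (∀ x : ℝ, x ∉ Set.Icc (0 : ℝ) 1 → f x = x) ∧
    ∃ (m : ℕ) (x : Fin (m + 1) → ℝ), x 0 = 0 ∧ x (Fin.last m) = 1 ∧ StrictMono x ∧
      (∀ i, IsDyadic (x i)) ∧
      ∀ i : Fin m, ∃ (k : ℤ) (c : ℝ),
        ∀ t ∈ Set.Icc (x i.castSucc) (x i.succ), f t = 2 ^ k * t + c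

/-- Membership in the subgroup `H ≤ F` of elements whose slopes at `0` and `1`
coincide. -/
def InH (f : ℝ ≃o ℝ) : Prop :=
  InThompsonF f ∧
    ∃ (k : ℤ) (ε : ℝ), 0 < ε ∧ (∀ t ∈ Set.Icc (0 : ℝ) ε, f t = 2 ^ k * t) ∧
      ∀ t ∈ Set.Icc (1 - ε) (1 : ℝ), f t = 1 + 2 ^ k * (t - 1)

/-! ### The generators of `G_ρ` -/

/-- `ζ` is the homeomorphism of `ℝ` which on each `[n, n+1]` is the conjugate of `ν`
(a homeomorphism of `[0,1]`) by the orientation-preserving isometry `[n,n+1] → [0,1]`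
if `ρ(n + ½) = b`, and by the orientation-reversing isometry if `ρ(n + ½) = b⁻¹`.
(In the encoding of `½ℤ` by `ℤ`, the point `n + ½` has index `2n + 1`.) -/
def IsZeta (ρ : ℤ → Letter) (ν ζ : ℝ ≃o ℝ) : Prop :=
  ∀ n : ℤ, ∀ x ∈ Set.Icc (n : ℝ) (n + 1),
    (ρ (2 * n + 1) = Letter.b → ζ x = n + ν (x - n)) ∧
    (ρ (2 * n + 1) = Letter.B → ζ x = (n + 1) - ν ((n + 1) - x))

/-- `χ` is the homeomorphism of `ℝ` which on each `[n-½, n+½]` is the conjugate of `ν`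
by the orientation-preserving isometry `[n-½, n+½] → [0,1]` if `ρ(n) = a`, and by the
orientation-reversing isometry if `ρ(n) = a⁻¹`. -/
def IsChi (ρ : ℤ → Letter) (ν χ : ℝ ≃o ℝ) : Prop :=
  ∀ n : ℤ, ∀ x ∈ Set.Icc ((n : ℝ) - 1/2) ((n : ℝ) + 1/2),
    (ρ (2 * n) = Letter.a → χ x = ((n : ℝ) - 1/2) + ν (x - ((n : ℝ) - 1/2))) ∧
    (ρ (2 * n) = Letter.A → χ x = ((n : ℝ) + 1/2) - ν (((n : ℝ) + 1/2) - x))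

/-! ### Bounded cohomology in degree two -/

/-- A bounded 2-cocycle on `G` with trivial real coefficients. -/
def IsBounded2Cocycle {G : Type*} [Group G] (ω : G → G → ℝ) : Prop :=
  (∃ C : ℝ, ∀ g h : G, |ω g h| ≤ C) ∧
    ∀ g₁ g₂ g₃ : G, ω g₂ g₃ - ω (g₁ * g₂) g₃ + ω g₁ (g₂ * g₃) - ω g₁ g₂ = 0

/-- `ω` is the coboundary of a bounded real-valued function. -/
def IsCoboundaryOfBounded {G : Type*} [Group G] (ω : G → G → ℝ) : Prop :=
  ∃ φ : G → ℝ, (∃ C : ℝ, ∀ g : G, |φ g| ≤ C) ∧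
    ∀ g h : G, ω g h = φ h - φ (g * h) + φ g

/-- A group is 2-boundedly acyclic if `H²_b(G; ℝ) = 0`, i.e. every bounded 2-cocycle is
the coboundary of a bounded function. -/
def Is2BoundedlyAcyclic (G : Type*) [Group G] : Prop :=
  ∀ ω : G → G → ℝ, IsBounded2Cocycle ω → IsCoboundaryOfBounded ω

/-- A 2-cocycle is homogeneous if it vanishes on powers of a single element. -/
def IsHomogeneous {G : Type*} [Group G] (ω : G → G → ℝ) : Prop :=
  ∀ (g : G) (i j : ℤ), ω (g ^ i) (g ^ j) = 0

/-!
Let `x₀` be a dyadic point in an interval fixed by the elements in question. These elements act at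
bounded distance, and near a point they depend only on the labelling around that point; so they
fix a neighbourhood of every translate of `x₀`, by an isometry of the line preserving `ℤ`, around
which the labelling looks the same up to a large distance `W`. By quasi-periodicity such markers
occur with bounded gaps, so the gaps, together with the labelling within distance `W` of them, fall
into finitely many classes, and each element is determined by one homeomorphism per class, lying in
a copy of `F′`.

Conversely `G_ρ` contains every element that acts by a prescribed homeomorphism of `F′` on all gaps
of one class and trivially elsewhere. Every element of `F′` supported in a unit interval can be
performed in all cells that carry a given letter. Since `F′` is perfect, commutators allow one to
restrict this to the cells around which the labelling spells a given word, and conjugations spread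
it from one cell to the union of the cells of a gap.
-/

/-! ### Dyadic numbers -/

theorem exists_int_eq_two_zpow {n : ℤ} (hn : 0 ≤ n) : ∃ z : ℤ, (z : ℝ) = 2 ^ n ∧ 0 < z := by
  lift n to ℕ using hn
  exact ⟨2 ^ n, by push_cast; rw [zpow_natCast], by positivity⟩

namespace IsDyadic

theorem intCast (n : ℤ) : IsDyadic n := ⟨n, 0, by simp⟩

theorem zero : IsDyadic 0 := ⟨0, 0, by simp⟩

theorem one : IsDyadic 1 := ⟨1, 0, by simp⟩

theorem exists_eq_div_two_pow {x : ℝ} (h : IsDyadic x) :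
    ∃ N : ℕ, ∀ M : ℕ, N ≤ M → ∃ a : ℤ, x = a / 2 ^ M := by
  obtain ⟨a, b, rfl⟩ := h
  refine ⟨b, fun M hM => ⟨a * 2 ^ (M - b), ?_⟩⟩
  obtain ⟨d, rfl⟩ := Nat.exists_eq_add_of_le hM
  rw [Nat.add_sub_cancel_left, pow_add]
  push_cast
  field_simp

theorem add {x y : ℝ} (hx : IsDyadic x) (hy : IsDyadic y) : IsDyadic (x + y) := by
  obtain ⟨N, hN⟩ := hx.exists_eq_div_two_pow
  obtain ⟨M, hM⟩ := hy.exists_eq_div_two_pow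
  obtain ⟨a, rfl⟩ := hN (max N M) (le_max_left _ _)
  obtain ⟨b, rfl⟩ := hM (max N M) (le_max_right _ _)
  exact ⟨a + b, max N M, by push_cast; ring⟩

theorem neg {x : ℝ} (hx : IsDyadic x) : IsDyadic (-x) := by
  obtain ⟨a, b, rfl⟩ := hx
  exact ⟨-a, b, by push_cast; ring⟩

theorem sub {x y : ℝ} (hx : IsDyadic x) (hy : IsDyadic y) : IsDyadic (x - y) :=
  sub_eq_add_neg x y ▸ hx.add hy.neg

theorem zpow_mul {x : ℝ} (hx : IsDyadic x) (k : ℤ) : IsDyadic (2 ^ k * x) := by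
  obtain ⟨a, b, rfl⟩ := hx
  obtain ⟨n, rfl | rfl⟩ := k.eq_nat_or_neg
  · exact ⟨2 ^ n * a, b, by push_cast; rw [zpow_natCast, mul_div_assoc]⟩
  · refine ⟨a, b + n, ?_⟩
    rw [zpow_neg, zpow_natCast, pow_add]
    field_simp

end IsDyadic

theorem exists_isDyadic_between {x y : ℝ} (h : x < y) : ∃ d, IsDyadic d ∧ x < d ∧ d < y := by
  obtain ⟨n, hn⟩ := exists_nat_gt (y - x)⁻¹
  have hn' : (y - x)⁻¹ < ((2 ^ n : ℕ) : ℝ) :=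
    hn.trans (Nat.cast_lt.mpr Nat.lt_two_pow_self)
  obtain ⟨z, hxz, hzy⟩ := exists_div_btwn h hn'
  exact ⟨_, ⟨z, n, by push_cast; rfl⟩, hxz, hzy⟩

/-! ### Piecewise linear homeomorphisms of the line -/

/-- On each interval of the mesh of step `2⁻ᴺ`, the map `f` is affine with slope a power of two
and constant term a multiple of `2⁻ᴺ`. The bound on the slopes makes the maps satisfying this for
some `N` a group. -/
def IsMeshPL (N : ℕ) (f : ℝ ≃o ℝ) : Prop :=
  ∀ i : ℤ, ∃ k c : ℤ, |k| ≤ N ∧ ∀ t : ℝ, 2 ^ N * t ∈ Set.Icc (i : ℝ) (i + 1) →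
    f t = 2 ^ k * t + c / 2 ^ N

theorem mem_Icc_ediv {i D : ℤ} {s : ℝ} (hD : 0 < D) (hs : D * s ∈ Set.Icc (i : ℝ) (i + 1)) :
    s ∈ Set.Icc ((i / D : ℤ) : ℝ) ((i / D : ℤ) + 1) := by
  have hD' : (0 : ℝ) < D := by exact_mod_cast hD
  have lower : (D : ℝ) * (i / D : ℤ) ≤ i := by exact_mod_cast Int.mul_ediv_self_le hD.ne'
  have upper : (i : ℝ) + 1 ≤ D * ((i / D : ℤ) + 1) := by
    rw [mul_comm]
    exact_mod_cast Int.lt_ediv_add_one_mul_self i hD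
  exact ⟨le_of_mul_le_mul_left (lower.trans hs.1) hD', le_of_mul_le_mul_left (hs.2.trans upper) hD'⟩

namespace IsMeshPL

theorem mono {N M : ℕ} {f : ℝ ≃o ℝ} (h : IsMeshPL N f) (hNM : N ≤ M) : IsMeshPL M f := by
  obtain ⟨d, rfl⟩ := Nat.exists_eq_add_of_le hNM
  intro i
  obtain ⟨k, c, hk, hf⟩ := h (i / 2 ^ d)
  refine ⟨k, 2 ^ d * c, by omega, fun t ht => ?_⟩
  rw [hf t (mem_Icc_ediv (by positivity) (by push_cast; rwa [← mul_assoc, ← pow_add, add_comm d])),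
    pow_add]
  push_cast
  field_simp

theorem mul {N : ℕ} {f g : ℝ ≃o ℝ} (hf : IsMeshPL N f) (hg : IsMeshPL N g) :
    IsMeshPL (2 * N) (f * g) := by
  intro i
  obtain ⟨k, c, hk, hgt⟩ := hg (i / 2 ^ N)
  obtain ⟨D, hD, hD0⟩ := exists_int_eq_two_zpow (n := N - k) (by grind)
  obtain ⟨l, e, hl, hft⟩ := hf (i / D + c)
  obtain ⟨E, hE, -⟩ := exists_int_eq_two_zpow (n := N + l) (by grind)
  refine ⟨l + k, E * c + 2 ^ N * e, by grind, fun t ht => ?_⟩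
  rw [two_mul, pow_add] at ht ⊢
  have hgv : g t = 2 ^ k * t + c / 2 ^ N :=
    hgt t (mem_Icc_ediv (by positivity) (by push_cast; rwa [← mul_assoc]))
  have hDt : D * (2 ^ N * (2 ^ k * t)) = 2 ^ N * 2 ^ N * t := by
    rw [hD, zpow_sub₀ two_ne_zero, zpow_natCast]
    field_simp
  have hgt_mem : 2 ^ N * g t ∈ Set.Icc ((i / D + c : ℤ) : ℝ) ((i / D + c : ℤ) + 1) := by
    have h := mem_Icc_ediv hD0 (hDt ▸ ht)
    rw [hgv, mul_add, mul_div_cancel₀ _ (by positivity)]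
    push_cast
    constructor <;> linarith [h.1, h.2]
  rw [RelIso.mul_apply, hft _ hgt_mem, hgv, zpow_add₀ two_ne_zero]
  push_cast
  rw [hE, zpow_add₀ two_ne_zero, zpow_natCast]
  field_simp
  ring

theorem exists_int_apply {N : ℕ} {f : ℝ ≃o ℝ} (hf : IsMeshPL N f) (i : ℤ) :
    ∃ z : ℤ, 2 ^ N * 2 ^ N * f (i / 2 ^ N) = z := by
  obtain ⟨k, c, hk, hft⟩ := hf i
  obtain ⟨E, hE, -⟩ := exists_int_eq_two_zpow (n := N + k) (by grind)
  refine ⟨E * i + 2 ^ N * c, ?_⟩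
  rw [hft _ (by rw [mul_div_cancel₀ _ (by positivity)]; simp)]
  push_cast
  rw [hE, zpow_add₀ two_ne_zero, zpow_natCast]
  field_simp

theorem inv {N : ℕ} {f : ℝ ≃o ℝ} (hf : IsMeshPL N f) : IsMeshPL (2 * N) f⁻¹ := by
  intro j
  have hN : (0 : ℝ) < 2 ^ N := by positivity
  set x : ℝ := f⁻¹ (j / (2 ^ N * 2 ^ N)) with hx
  have hfx : 2 ^ N * 2 ^ N * f x = j := by
    rw [hx, RelIso.apply_inv_self, mul_div_cancel₀ _ (by positivity)]
  set i : ℤ := ⌊2 ^ N * x⌋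
  obtain ⟨k, c, hk, hft⟩ := hf i
  obtain ⟨z, hz⟩ := hf.exists_int_apply (i + 1)
  obtain ⟨E, hE, -⟩ := exists_int_eq_two_zpow (n := N - k) (by grind)
  have hxi : x < (i + 1 : ℤ) / 2 ^ N := by
    rw [lt_div_iff₀ hN, mul_comm]
    push_cast
    exact Int.lt_floor_add_one _
  have hjz : (j : ℝ) + 1 ≤ z := by
    have : (j : ℝ) < z := by
      rw [← hfx, ← hz]
      exact mul_lt_mul_of_pos_left (f.strictMono hxi) (by positivity)
    exact_mod_cast this
  refine ⟨-k, -(E * c), by grind, fun t ht => ?_⟩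
  rw [two_mul, pow_add] at ht ⊢
  obtain ⟨u, rfl⟩ := f.surjective t
  have hxu : x ≤ u := by
    rw [← f.le_iff_le]
    exact le_of_mul_le_mul_left (hfx.trans_le ht.1) (by positivity)
  have hui : u ≤ (i + 1 : ℤ) / 2 ^ N := by
    rw [← f.le_iff_le]
    exact le_of_mul_le_mul_left (ht.2.trans (hjz.trans_eq hz.symm)) (by positivity)
  have hu : 2 ^ N * u ∈ Set.Icc (i : ℝ) (i + 1) := by
    rw [le_div_iff₀ hN, mul_comm] at hui
    push_cast at hui
    exact ⟨(Int.floor_le _).trans (by gcongr), hui⟩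
  rw [RelIso.inv_apply_self, hft u hu]
  push_cast
  rw [hE, zpow_sub₀ two_ne_zero, zpow_natCast, zpow_neg]
  field_simp
  ring

end IsMeshPL

/-- The group of piecewise linear homeomorphisms of `ℝ` whose breakpoints lie on a dyadic mesh,
with slopes powers of two. -/
def dyadicPL : Subgroup (ℝ ≃o ℝ) where
  carrier := {f | ∃ N, IsMeshPL N f}
  mul_mem' := by
    rintro f g ⟨N, hN⟩ ⟨M, hM⟩
    exact ⟨_, (hN.mono (le_max_left N M)).mul (hM.mono (le_max_right N M))⟩
  one_mem' := ⟨0, fun i => ⟨0, 0, by simp⟩⟩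
  inv_mem' := by
    rintro f ⟨N, hN⟩
    exact ⟨_, hN.inv⟩

theorem IsDyadic.apply {f : ℝ ≃o ℝ} (hf : f ∈ dyadicPL) {x : ℝ} (hx : IsDyadic x) :
    IsDyadic (f x) := by
  obtain ⟨N, hN⟩ := hf
  obtain ⟨k, c, -, hft⟩ := hN ⌊2 ^ N * x⌋
  rw [hft x ⟨Int.floor_le _, (Int.lt_floor_add_one _).le⟩]
  exact (hx.zpow_mul k).add ⟨c, N, rfl⟩

/-- The affine homeomorphism `x ↦ 2 ^ k * x + c`. -/
noncomputable def affineIso (k : ℤ) (c : ℝ) : ℝ ≃o ℝ :=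
  (OrderIso.mulLeft₀ ((2 : ℝ) ^ k) (by positivity)).trans (OrderIso.addRight c)

@[simp] theorem affineIso_apply (k : ℤ) (c x : ℝ) : affineIso k c x = 2 ^ k * x + c := rfl

theorem affineIso_mem_dyadicPL (k : ℤ) {c : ℝ} (hc : IsDyadic c) : affineIso k c ∈ dyadicPL := by
  obtain ⟨N, hN⟩ := hc.exists_eq_div_two_pow
  obtain ⟨a, rfl⟩ := hN (max N k.natAbs) (le_max_left _ _)
  exact ⟨max N k.natAbs, fun i => ⟨k, a, by grind, fun t _ => rfl⟩⟩

theorem inv_apply_eq_of_apply_eq {f : ℝ ≃o ℝ} {x y : ℝ} (h : f x = y) : f⁻¹ y = x :=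
  h ▸ RelIso.inv_apply_self f x

theorem exists_orderIso_glue {α β : Type*} [LinearOrder α] [LinearOrder β] (f g : α ≃o β) (a : α)
    (h : f a = g a) : ∃ u : α ≃o β, (∀ x ≤ a, u x = f x) ∧ ∀ x, a ≤ x → u x = g x := by
  let u : α → β := fun x => if x ≤ a then f x else g x
  have left : ∀ x ≤ a, u x = f x := fun x hx => if_pos hx
  have right : ∀ x, a ≤ x → u x = g x := fun x hx => by
    rcases hx.eq_or_lt with rfl | hlt
    · rw [left _ le_rfl, h]
    · exact if_neg hlt.not_ge
  have mono : StrictMono u :=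
    StrictMonoOn.Iic_union_Ici (a := a)
      (f.strictMono.strictMonoOn _ |>.congr fun x hx => (left x hx).symm)
      (g.strictMono.strictMonoOn _ |>.congr fun x hx => (right x hx).symm)
  have surj : Function.Surjective u := fun y => by
    rcases le_total y (f a) with hy | hy
    · exact ⟨f.symm y, by rw [left _ (f.symm_apply_le.mpr hy), f.apply_symm_apply]⟩
    · exact ⟨g.symm y, by rw [right _ (g.le_symm_apply.mpr (h ▸ hy)), g.apply_symm_apply]⟩
  exact ⟨mono.orderIsoOfSurjective u surj, left, right⟩

theorem mem_dyadicPL_of_eq_of_eq {f g u : ℝ ≃o ℝ} {a : ℝ} (hf : f ∈ dyadicPL) (hg : g ∈ dyadicPL)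
    (ha : IsDyadic a) (left : ∀ x ≤ a, u x = f x) (right : ∀ x, a ≤ x → u x = g x) :
    u ∈ dyadicPL := by
  obtain ⟨N, hN⟩ := hf
  obtain ⟨M, hM⟩ := hg
  obtain ⟨L, hL⟩ := ha.exists_eq_div_two_pow
  obtain ⟨K, hNK, hMK, hLK⟩ : ∃ K, N ≤ K ∧ M ≤ K ∧ L ≤ K := ⟨max N (max M L), by grind⟩
  obtain ⟨z, rfl⟩ := hL K hLK
  refine ⟨K, fun i => ?_⟩
  rcases lt_or_ge i z with hi | hi
  · obtain ⟨k, c, hk, hf⟩ := hN.mono hNK i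
    refine ⟨k, c, hk, fun t ht => ?_⟩
    rw [left t, hf t ht]
    rw [le_div_iff₀' (by positivity)]
    exact ht.2.trans (by exact_mod_cast hi)
  · obtain ⟨k, c, hk, hg⟩ := hM.mono hMK i
    refine ⟨k, c, hk, fun t ht => ?_⟩
    rw [right t, hg t ht]
    rw [div_le_iff₀' (by positivity)]
    exact le_trans (by exact_mod_cast hi) ht.1

theorem exists_mem_dyadicPL_glue {f g : ℝ ≃o ℝ} {a : ℝ} (hf : f ∈ dyadicPL) (hg : g ∈ dyadicPL)
    (ha : IsDyadic a) (h : f a = g a) :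
    ∃ u ∈ dyadicPL, (∀ x ≤ a, u x = f x) ∧ ∀ x, a ≤ x → u x = g x := by
  obtain ⟨u, left, right⟩ := exists_orderIso_glue f g a h
  exact ⟨u, mem_dyadicPL_of_eq_of_eq hf hg ha left right, left, right⟩

theorem exists_mem_dyadicPL_truncation {f : ℝ ≃o ℝ} {p q : ℝ} (hf : f ∈ dyadicPL) (hp : IsDyadic p)
    (hq : IsDyadic q) (hpq : p ≤ q) (hfp : f p = p) (hfq : f q = q) :
    ∃ w ∈ dyadicPL, (∀ x ∈ Set.Icc p q, w x = f x) ∧ ∀ x ∉ Set.Ioo p q, w x = x := by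
  obtain ⟨v, hv, vleft, vright⟩ := exists_mem_dyadicPL_glue (one_mem _) hf hp hfp.symm
  obtain ⟨w, hw, wleft, wright⟩ := exists_mem_dyadicPL_glue hv (one_mem _) hq
    ((vright q hpq).trans hfq)
  refine ⟨w, hw, fun x hx => (wleft x hx.2).trans (vright x hx.1), fun x hx => ?_⟩
  rcases le_or_gt x p with h | h
  · exact (wleft x (h.trans hpq)).trans (vleft x h)
  · exact wright x (not_lt.mp fun hxq => hx ⟨h, hxq⟩)

/-! ### Transitivity on dyadic intervals -/

theorem exists_mem_dyadicPL_map_one (n : ℕ) : ∃ f ∈ dyadicPL, f 0 = 0 ∧ f 1 = n + 1 := by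
  -- slope `1` up to `0`, slope `2` on `[0, 1]`, slope `1` from `1` on
  obtain ⟨v, hv, vleft, vright⟩ := exists_mem_dyadicPL_glue (one_mem _)
    (affineIso_mem_dyadicPL 1 .zero) .zero (by simp)
  obtain ⟨u, hu, uleft, uright⟩ := exists_mem_dyadicPL_glue hv
    (affineIso_mem_dyadicPL 0 .one) .one (by rw [vright 1 zero_le_one]; norm_num)
  have hu0 : u 0 = 0 := by rw [uleft 0 zero_le_one, vleft 0 le_rfl, RelIso.one_apply]
  refine ⟨u ^ n, pow_mem hu n, ?_⟩
  induction n with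
  | zero => simp
  | succ n ih =>
    rw [pow_succ', RelIso.mul_apply, RelIso.mul_apply, ih.1, ih.2, hu0,
      uright _ (by linarith [n.cast_nonneg (α := ℝ)])]
    simp

theorem exists_mem_dyadicPL_map_two_pow {x y : ℝ} (hx : IsDyadic x) (hy : IsDyadic y)
    (hxy : x < y) :
    ∃ N : ℕ, ∀ M ≥ N, ∃ θ ∈ dyadicPL, θ 0 = x ∧ θ (1 / 2 ^ M) = y := by
  obtain ⟨N, hN⟩ := (hy.sub hx).exists_eq_div_two_pow
  refine ⟨N, fun M hM => ?_⟩
  obtain ⟨r, hr⟩ := hN M hM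
  have r_pos : 0 < r := by
    have : (0 : ℝ) < r / 2 ^ M := hr ▸ sub_pos.mpr hxy
    rw [div_pos_iff_of_pos_right (by positivity)] at this
    exact_mod_cast this
  obtain ⟨n, rfl⟩ : ∃ n : ℕ, r = n + 1 := ⟨(r - 1).toNat, by omega⟩
  obtain ⟨f, hf, hf0, hf1⟩ := exists_mem_dyadicPL_map_one n
  refine ⟨affineIso (-M) x * f * affineIso M 0, mul_mem (mul_mem (affineIso_mem_dyadicPL _ hx) hf)
    (affineIso_mem_dyadicPL _ .zero), by simp [hf0], ?_⟩
  have hM1 : affineIso M 0 (1 / 2 ^ M) = 1 := by simp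
  rw [RelIso.mul_apply, RelIso.mul_apply, hM1, hf1, affineIso_apply, zpow_neg, zpow_natCast,
    ← sub_add_cancel y x, hr]
  push_cast
  ring

theorem exists_mem_dyadicPL_map_map {a b c d : ℝ} (ha : IsDyadic a) (hb : IsDyadic b)
    (hc : IsDyadic c) (hd : IsDyadic d) (hab : a < b) (hcd : c < d) :
    ∃ θ ∈ dyadicPL, θ a = c ∧ θ b = d := by
  obtain ⟨N, hN⟩ := exists_mem_dyadicPL_map_two_pow ha hb hab
  obtain ⟨M, hM⟩ := exists_mem_dyadicPL_map_two_pow hc hd hcd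
  obtain ⟨θ, hθ, θ0, θ1⟩ := hN (max N M) (le_max_left _ _)
  obtain ⟨η, hη, η0, η1⟩ := hM (max N M) (le_max_right _ _)
  refine ⟨η * θ⁻¹, mul_mem hη (inv_mem hθ), ?_, ?_⟩
  · rw [RelIso.mul_apply, inv_apply_eq_of_apply_eq θ0, η0]
  · rw [RelIso.mul_apply, inv_apply_eq_of_apply_eq θ1, η1]

/-! ### Compactly supported piecewise linear homeomorphisms -/

/-- The piecewise linear dyadic homeomorphisms supported in a compact subset of `(p, q)`. -/
def dyadicPLIoo (p q : ℝ) : Subgroup (ℝ ≃o ℝ) where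
  carrier := {f | f ∈ dyadicPL ∧ ∃ α β, p < α ∧ β < q ∧ ∀ x, f x ≠ x → x ∈ Set.Icc α β}
  one_mem' := ⟨one_mem _, p + 1, q - 1, by linarith, by linarith, fun x hx => absurd rfl hx⟩
  mul_mem' := by
    rintro f g ⟨hf, α, β, hα, hβ, f_supp⟩ ⟨hg, α', β', hα', hβ', g_supp⟩
    refine ⟨mul_mem hf hg, min α α', max β β', lt_min hα hα', max_lt hβ hβ', fun x hx => ?_⟩
    by_cases hgx : g x = x
    · rw [RelIso.mul_apply, hgx] at hx
      exact Set.Icc_subset_Icc (min_le_left _ _) (le_max_left _ _) (f_supp x hx)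
    · exact Set.Icc_subset_Icc (min_le_right _ _) (le_max_right _ _) (g_supp x hgx)
  inv_mem' := by
    rintro f ⟨hf, α, β, hα, hβ, f_supp⟩
    exact ⟨inv_mem hf, α, β, hα, hβ, fun x hx =>
      f_supp x fun h => hx (inv_apply_eq_of_apply_eq h)⟩

theorem dyadicPLIoo_mono {p q p' q' : ℝ} (hp : p' ≤ p) (hq : q ≤ q') :
    dyadicPLIoo p q ≤ dyadicPLIoo p' q' := by
  rintro f ⟨hf, α, β, hα, hβ, f_supp⟩
  exact ⟨hf, α, β, hp.trans_lt hα, hβ.trans_le hq, f_supp⟩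

theorem apply_eq_self_of_mem_dyadicPLIoo {p q : ℝ} {f : ℝ ≃o ℝ} (hf : f ∈ dyadicPLIoo p q) {x : ℝ}
    (hx : x ∉ Set.Ioo p q) : f x = x := by
  obtain ⟨-, α, β, hα, hβ, f_supp⟩ := hf
  by_contra h
  exact hx ⟨hα.trans_le (f_supp x h).1, (f_supp x h).2.trans_lt hβ⟩

theorem mem_dyadicPLIoo_of_apply_eq_self {p q a b : ℝ} {f : ℝ ≃o ℝ} (hf : f ∈ dyadicPL)
    (hpa : p < a) (hbq : b < q) (h : ∀ x ∉ Set.Ioo a b, f x = x) : f ∈ dyadicPLIoo p q :=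
  ⟨hf, a, b, hpa, hbq, fun x hx => Set.Ioo_subset_Icc_self (by_contra fun h' => hx (h x h'))⟩

theorem exists_mem_dyadicPLIoo_eqOn {f : ℝ ≃o ℝ} {p q ε : ℝ} (hf : f ∈ dyadicPL) (hp : IsDyadic p)
    (hq : IsDyadic q) (hpq : p ≤ q) (hε : 0 < ε) (hfp : ∀ x ∈ Metric.ball p ε, f x = x)
    (hfq : ∀ x ∈ Metric.ball q ε, f x = x) :
    ∃ h ∈ dyadicPLIoo p q, Set.EqOn h f (Set.Icc p q) := by
  obtain ⟨w, hw, hwf, hw_fix⟩ := exists_mem_dyadicPL_truncation hf hp hq hpq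
    (hfp p (Metric.mem_ball_self hε)) (hfq q (Metric.mem_ball_self hε))
  refine ⟨w, mem_dyadicPLIoo_of_apply_eq_self hw (a := p + ε / 2) (b := q - ε / 2) (by linarith)
    (by linarith) fun x hx => ?_, hwf⟩
  by_cases hxpq : x ∈ Set.Ioo p q
  · rw [hwf x (Set.Ioo_subset_Icc_self hxpq)]
    obtain ⟨hpx, hxq⟩ := hxpq
    rw [Set.mem_Ioo, not_and_or, not_lt, not_lt] at hx
    rcases hx with hx | hx
    · exact hfp x (by rw [Real.ball_eq_Ioo]; constructor <;> linarith)
    · exact hfq x (by rw [Real.ball_eq_Ioo]; constructor <;> linarith)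
  · exact hw_fix x hxpq

theorem dyadicPLIoo_eq_bot {p q : ℝ} (hqp : q ≤ p) : dyadicPLIoo p q = ⊥ :=
  (Subgroup.eq_bot_iff_forall _).mpr fun f hf => by
    ext x
    exact apply_eq_self_of_mem_dyadicPLIoo hf (by simp [hqp])

theorem exists_isDyadic_support {p q : ℝ} (hpq : p < q) {f : ℝ ≃o ℝ} (hf : f ∈ dyadicPLIoo p q) :
    ∃ a b, IsDyadic a ∧ IsDyadic b ∧ p < a ∧ a < b ∧ b < q ∧ ∀ x ∉ Set.Ioo a b, f x = x := by
  obtain ⟨-, α, β, hα, hβ, f_supp⟩ := hf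
  obtain ⟨a, da, hpa, ha⟩ := exists_isDyadic_between (lt_min hα hpq)
  obtain ⟨b, db, hb, hbq⟩ :=
    exists_isDyadic_between (max_lt hβ (ha.trans_le (min_le_right _ _)))
  rw [lt_min_iff] at ha
  rw [max_lt_iff] at hb
  refine ⟨a, b, da, db, hpa, hb.2, hbq, fun x hx => ?_⟩
  by_contra h
  exact hx ⟨ha.1.trans_le (f_supp x h).1, (f_supp x h).2.trans_lt hb.1⟩

theorem conj_mem_dyadicPLIoo {p q p' q' : ℝ} {f θ : ℝ ≃o ℝ} (hf : f ∈ dyadicPLIoo p q)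
    (hθ : θ ∈ dyadicPL) (hp : p' ≤ θ p) (hq : θ q ≤ q') : θ * f * θ⁻¹ ∈ dyadicPLIoo p' q' := by
  obtain ⟨hf, α, β, hα, hβ, f_supp⟩ := hf
  refine ⟨mul_mem (mul_mem hθ hf) (inv_mem hθ), θ α, θ β, hp.trans_lt (θ.strictMono hα),
    (θ.strictMono hβ).trans_le hq, fun x hx => ?_⟩
  obtain ⟨y, rfl⟩ := θ.surjective x
  rw [RelIso.mul_apply, RelIso.mul_apply, RelIso.inv_apply_self] at hx
  have := f_supp y fun h => hx (congrArg θ h)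
  exact ⟨θ.monotone this.1, θ.monotone this.2⟩

theorem exists_mem_dyadicPLIoo_map_map {p q a b c d : ℝ} (ha : IsDyadic a) (hb : IsDyadic b)
    (hc : IsDyadic c) (hd : IsDyadic d) (hpa : p < a) (hab : a < b) (hbq : b < q) (hpc : p < c)
    (hcd : c < d) (hdq : d < q) : ∃ t ∈ dyadicPLIoo p q, t a = c ∧ t b = d := by
  obtain ⟨p', dp, hp, hp'⟩ := exists_isDyadic_between (lt_min hpa hpc)
  obtain ⟨q', dq, hq', hq⟩ := exists_isDyadic_between (max_lt hbq hdq)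
  rw [lt_min_iff] at hp'
  rw [max_lt_iff] at hq'
  obtain ⟨θ₁, hθ₁, θ₁p, θ₁a⟩ := exists_mem_dyadicPL_map_map dp ha dp hc hp'.1 hp'.2
  obtain ⟨θ₂, hθ₂, θ₂a, θ₂b⟩ := exists_mem_dyadicPL_map_map ha hb hc hd hab hcd
  obtain ⟨θ₃, hθ₃, θ₃b, θ₃q⟩ := exists_mem_dyadicPL_map_map hb dq hd dq hq'.1 hq'.2
  obtain ⟨u, hu, uleft, uright⟩ := exists_mem_dyadicPL_glue hθ₁ hθ₂ ha (θ₁a.trans θ₂a.symm)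
  obtain ⟨v, hv, vleft, vright⟩ := exists_mem_dyadicPL_glue hu hθ₃ hb
    ((uright b hab.le).trans (θ₂b.trans θ₃b.symm))
  obtain ⟨w, hw, hwv, hw_fix⟩ := exists_mem_dyadicPL_truncation hv dp dq (by linarith)
    (by rw [vleft p' (by linarith), uleft p' hp'.1.le, θ₁p]) (by rw [vright q' hq'.1.le, θ₃q])
  refine ⟨w, mem_dyadicPLIoo_of_apply_eq_self hw hp hq hw_fix, ?_, ?_⟩
  · rw [hwv a ⟨hp'.1.le, by linarith⟩, vleft a hab.le, uleft a le_rfl, θ₁a]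
  · rw [hwv b ⟨by linarith, hq'.1.le⟩, vright b le_rfl, θ₃b]

theorem exists_conj_mem_dyadicPLIoo {p q p' q' : ℝ} {h : ℝ ≃o ℝ} (hh : h ∈ dyadicPLIoo p q)
    (hp : p ≤ p') (hpq' : p' < q') (hq : q' ≤ q) :
    ∃ t ∈ dyadicPLIoo p q, t * h * t⁻¹ ∈ dyadicPLIoo p' q' := by
  obtain ⟨a, b, da, db, hpa, hab, hbq, h_fix⟩ :=
    exists_isDyadic_support (hp.trans_lt (hpq'.trans_le hq)) hh
  obtain ⟨c, dc, hpc, hcq⟩ := exists_isDyadic_between hpq'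
  obtain ⟨d, dd, hcd, hdq⟩ := exists_isDyadic_between hcq
  obtain ⟨t, ht, hta, htb⟩ := exists_mem_dyadicPLIoo_map_map da db dc dd hpa hab hbq
    (hp.trans_lt hpc) hcd (hdq.trans_le hq)
  refine ⟨t, ht, ?_⟩
  refine mem_dyadicPLIoo_of_apply_eq_self (mul_mem (mul_mem ht.1 hh.1) (inv_mem ht.1)) hpc hdq
    fun x hx => ?_
  obtain ⟨y, rfl⟩ := t.surjective x
  rw [RelIso.mul_apply, RelIso.mul_apply, RelIso.inv_apply_self, h_fix y fun hy => hx ?_]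
  exact ⟨hta ▸ t.strictMono hy.1, htb ▸ t.strictMono hy.2⟩

theorem exists_mem_dyadicPL_squeeze {p a b q P Q : ℝ} (hpa : p < a) (hab : a < b) (hbq : b < q)
    (ha : IsDyadic a) (hb : IsDyadic b) :
    ∃ θ ∈ dyadicPL, (∀ x ∈ Set.Icc a b, θ x = x) ∧ p ≤ θ P ∧ θ Q ≤ q := by
  obtain ⟨p', dp, hp, hp'⟩ := exists_isDyadic_between hpa
  obtain ⟨q', dq, hq', hq⟩ := exists_isDyadic_between hbq
  obtain ⟨P', dP, -, hP⟩ := exists_isDyadic_between (sub_one_lt (min P a))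
  obtain ⟨Q', dQ, hQ, -⟩ := exists_isDyadic_between (lt_add_one (max Q b))
  rw [lt_min_iff] at hP
  rw [max_lt_iff] at hQ
  obtain ⟨θ₁, hθ₁, θ₁P, θ₁a⟩ := exists_mem_dyadicPL_map_map dP ha dp ha hP.2 hp'
  obtain ⟨θ₂, hθ₂, θ₂b, θ₂Q⟩ := exists_mem_dyadicPL_map_map hb dQ hb dq hQ.2 hq'
  obtain ⟨v, hv, vleft, vright⟩ := exists_mem_dyadicPL_glue hθ₁ (one_mem _) ha θ₁a
  obtain ⟨θ, hθ, θleft, θright⟩ := exists_mem_dyadicPL_glue hv hθ₂ hb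
    ((vright b hab.le).trans θ₂b.symm)
  refine ⟨θ, hθ, fun x hx => (θleft x hx.2).trans (vright x hx.1), ?_, ?_⟩
  · calc p ≤ p' := hp.le
      _ = θ P' := by rw [θleft P' (by linarith), vleft P' hP.2.le, θ₁P]
      _ ≤ θ P := θ.monotone hP.1.le
  · calc θ Q ≤ θ Q' := θ.monotone hQ.1.le
      _ = q' := by rw [θright Q' hQ.2.le, θ₂Q]
      _ ≤ q := hq.le

theorem dyadicPLIoo_le_sup {p p' q q' : ℝ} (hp : p ≤ p') (h : p' < q) :
    dyadicPLIoo p q' ≤ dyadicPLIoo p q ⊔ dyadicPLIoo p' q' := fun f hf => by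
  rcases le_or_gt q' q with hq | hq
  · exact Subgroup.mem_sup_left (dyadicPLIoo_mono le_rfl hq hf)
  obtain ⟨f_mem, α, β, hα, hβ, f_supp⟩ := hf
  obtain ⟨d, hd, hd_gt, hd_lt⟩ := exists_isDyadic_between (max_lt hβ hq)
  obtain ⟨hβd, hqd⟩ := max_lt_iff.mp hd_gt
  obtain ⟨c, hc, hpc, hcq⟩ := exists_isDyadic_between h
  obtain ⟨c', hc', hpc', hcc'⟩ := exists_isDyadic_between hpc
  obtain ⟨t, ht, -, htd⟩ := exists_mem_dyadicPLIoo_map_map hc hd hc' hc hpc (hcq.trans hqd) hd_lt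
    hpc' hcc' (hcq.trans hq)
  have hconj : t * f * t⁻¹ ∈ dyadicPLIoo p q :=
    conj_mem_dyadicPLIoo ⟨f_mem, α, β, hα, hβd, f_supp⟩ ht.1
      (apply_eq_self_of_mem_dyadicPLIoo ht (by simp [hp])).ge (htd.trans_le hcq.le)
  have hf_eq : f = t⁻¹ * (t * f * t⁻¹) * t := by group
  rw [hf_eq]
  have ht' := Subgroup.mem_sup_right (S := dyadicPLIoo p q) ht
  exact mul_mem (mul_mem (inv_mem ht') (Subgroup.mem_sup_left hconj)) ht'

theorem dyadicPLIoo_le_of_forall_cell {m m' : ℝ} {K : Subgroup (ℝ ≃o ℝ)}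
    (hK : ∀ (j : ℤ) (p q : ℝ), m ≤ p → q ≤ m' → p < q → ((j : ℝ) - 1) / 2 ≤ p →
      q ≤ ((j : ℝ) + 1) / 2 → dyadicPLIoo p q ≤ K) : dyadicPLIoo m m' ≤ K := by
  have hcell (j : ℤ) (p q : ℝ) (hp : m ≤ p) (hq : q ≤ m') (hjp : ((j : ℝ) - 1) / 2 ≤ p)
      (hjq : q ≤ ((j : ℝ) + 1) / 2) : dyadicPLIoo p q ≤ K := by
    rcases lt_or_ge p q with hpq | hpq
    · exact hK j p q hp hq hpq hjp hjq
    · exact (dyadicPLIoo_eq_bot hpq).le.trans bot_le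
  have key (c : ℤ) (hc : ⌊2 * m⌋ ≤ c) : dyadicPLIoo m (min m' ((c : ℝ) / 2)) ≤ K := by
    induction c, hc using Int.leInduction with
    | base =>
      rw [dyadicPLIoo_eq_bot]
      · exact bot_le
      · exact (min_le_right _ _).trans (by linarith [Int.floor_le (2 * m)])
    | succ c _ ih =>
      push_cast
      rcases le_or_gt ((c : ℝ) / 2) m with hcm | hcm
      · exact hcell c _ _ le_rfl (min_le_left _ _) (by linarith) (min_le_right _ _)
      rcases le_or_gt m' ((c : ℝ) / 2) with hcm' | hcm'
      · rw [min_eq_left hcm'] at ih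
        exact (dyadicPLIoo_mono le_rfl (min_le_left _ _)).trans ih
      rw [min_eq_right hcm'.le] at ih
      have hlt : max m (((c : ℝ) - 1) / 2) < c / 2 := max_lt hcm (by linarith)
      exact (dyadicPLIoo_le_sup (le_max_left _ _) hlt).trans <| sup_le ih <|
        hcell c _ _ (le_max_left _ _) (min_le_left _ _) (le_max_right _ _) (min_le_right _ _)
  have h := key (max ⌊2 * m⌋ ⌈2 * m'⌉) (le_max_left _ _)
  rwa [min_eq_left] at h
  have : (⌈2 * m'⌉ : ℝ) ≤ (max ⌊2 * m⌋ ⌈2 * m'⌉ : ℤ) := by exact_mod_cast le_max_right _ _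
  linarith [Int.le_ceil (2 * m')]

/-! ### Perfectness -/

/-- `s` translates by `1` up to `Q - 2` and is the identity from `Q` on. -/
structure IsShift (Q : ℤ) (s : ℝ ≃o ℝ) : Prop where
  apply_eq_add_one : ∀ x : ℝ, x ≤ Q - 2 → s x = x + 1
  apply_eq_self : ∀ x : ℝ, Q ≤ x → s x = x

/-- `X` is the standard generator of Thompson's group which doubles `[n, n + 1]`, being the
identity before and the shift `s` after. -/
structure IsDoubling (s : ℝ ≃o ℝ) (n : ℤ) (X : ℝ ≃o ℝ) : Prop where
  apply_of_le : ∀ x : ℝ, x ≤ n → X x = x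
  apply_of_mem : ∀ x ∈ Set.Icc (n : ℝ) (n + 1), X x = 2 * x - n
  apply_of_ge : ∀ x : ℝ, n + 1 ≤ x → X x = s x

/-- `u` is a positive element with exponent `c`: it is the identity up to `A`, affine with integral
coefficients and slope at least `1` on the unit intervals from `A` to `M`, and the `c`-th power of
the shift `s` from `M` on. -/
structure IsPositive (Q : ℤ) (s : ℝ ≃o ℝ) (A M : ℤ) (c : ℕ) (u : ℝ ≃o ℝ) : Prop where
  le : A ≤ M
  add_le : M + c ≤ Q - 2
  apply_of_le : ∀ x : ℝ, x ≤ A → u x = x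
  apply_of_ge : ∀ x : ℝ, M ≤ x → u x = (s ^ c) x
  affine : ∀ i : ℤ, A ≤ i → i < M → ∃ (k : ℕ) (e : ℤ),
    ∀ t ∈ Set.Icc (i : ℝ) (i + 1), u t = 2 ^ k * t + e

theorem exists_isShift (Q : ℤ) : ∃ s ∈ dyadicPL, IsShift Q s := by
  obtain ⟨v, hv, vleft, vright⟩ := exists_mem_dyadicPL_glue (f := affineIso 0 1)
    (g := affineIso (-1) (Q / 2)) (a := (Q - 2 : ℤ)) (affineIso_mem_dyadicPL _ .one)
    (affineIso_mem_dyadicPL _ ⟨Q, 1, by simp⟩) (.intCast _) (by simp; ring)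
  push_cast at vleft vright
  obtain ⟨s, hs, sleft, sright⟩ := exists_mem_dyadicPL_glue hv (one_mem _) (.intCast Q) (by
    rw [vright _ (by linarith)]
    simp
    ring)
  exact ⟨s, hs, fun x hx => by rw [sleft x (by linarith), vleft x hx]; simp, sright⟩

namespace IsShift

variable {Q : ℤ} {s : ℝ ≃o ℝ}

theorem pow_apply_eq_add (hs : IsShift Q s) (n : ℕ) {x : ℝ} (hx : x + n ≤ Q - 1) :
    (s ^ n) x = x + n := by
  induction n with
  | zero => simp
  | succ n ih =>
    push_cast at hx ⊢
    rw [pow_succ', RelIso.mul_apply, ih (by linarith), hs.apply_eq_add_one _ (by linarith)]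
    ring

theorem pow_apply_eq_self (hs : IsShift Q s) (n : ℕ) {x : ℝ} (hx : Q ≤ x) : (s ^ n) x = x := by
  induction n with
  | zero => simp
  | succ n ih => rw [pow_succ, RelIso.mul_apply, hs.apply_eq_self x hx, ih]

theorem exists_isDoubling (hs : IsShift Q s) (hsPL : s ∈ dyadicPL) {n : ℤ} (hn : n ≤ Q - 3) :
    ∃ X ∈ dyadicPL, IsDoubling s n X := by
  have hn' : (n : ℝ) ≤ Q - 3 := by exact_mod_cast hn
  obtain ⟨v, hv, vleft, vright⟩ := exists_mem_dyadicPL_glue (g := affineIso 1 (-n)) (one_mem _)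
    (affineIso_mem_dyadicPL _ (IsDyadic.intCast n).neg) (.intCast n)
    (by rw [affineIso_apply, RelIso.one_apply]; ring)
  obtain ⟨X, hX, Xleft, Xright⟩ := exists_mem_dyadicPL_glue hv hsPL (.intCast (n + 1)) (by
    push_cast
    rw [vright _ (by linarith), hs.apply_eq_add_one _ (by linarith), affineIso_apply]
    ring)
  push_cast at Xleft Xright
  refine ⟨X, hX, fun x hx => ?_, fun x hx => ?_, Xright⟩
  · rw [Xleft x (by linarith), vleft x hx, RelIso.one_apply]
  · rw [Xleft x hx.2, vright x hx.1, affineIso_apply]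
    ring

end IsShift

namespace IsDoubling

variable {Q : ℤ} {s X Y Z : ℝ ≃o ℝ} {n : ℤ}

theorem eq (hX : IsDoubling s n X) (hY : IsDoubling s n Y) :
    X = Y := by
  ext x
  rcases le_total x n with h | h
  · rw [hX.apply_of_le x h, hY.apply_of_le x h]
  rcases le_total x (n + 1) with h' | h'
  · rw [hX.apply_of_mem x ⟨h, h'⟩, hY.apply_of_mem x ⟨h, h'⟩]
  · rw [hX.apply_of_ge x h', hY.apply_of_ge x h']

theorem mul_eq_mul (hs : IsShift Q s) (hn : n ≤ Q - 4) (hX : IsDoubling s (n - 1) X)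
    (hY : IsDoubling s n Y) (hZ : IsDoubling s (n + 1) Z) : Z * X = X * Y := by
  obtain ⟨X_le, X_mem, X_ge⟩ := hX
  obtain ⟨Y_le, Y_mem, Y_ge⟩ := hY
  obtain ⟨Z_le, Z_mem, Z_ge⟩ := hZ
  have hn' : (n : ℝ) ≤ Q - 4 := by exact_mod_cast hn
  push_cast at X_le X_mem X_ge Z_le Z_mem Z_ge
  ext x
  rw [RelIso.mul_apply, RelIso.mul_apply]
  rcases le_total x (n - 1) with h | h
  · rw [X_le x h, Z_le x (by linarith), Y_le x (by linarith), X_le x h]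
  rcases le_total x n with h' | h'
  · rw [X_mem x ⟨h, by linarith⟩, Y_le x h', X_mem x ⟨h, by linarith⟩, Z_le _ (by linarith)]
  rcases le_total x (n + 1) with h'' | h''
  · rw [X_ge x (by linarith), hs.apply_eq_add_one x (by linarith),
      Z_mem _ ⟨by linarith, by linarith⟩, Y_mem x ⟨h', h''⟩, X_ge _ (by linarith),
      hs.apply_eq_add_one _ (by linarith)]
    ring
  · have hsx : (n : ℝ) + 2 ≤ s x := by
      linarith [hs.apply_eq_add_one (n + 1) (by linarith), s.monotone h'']
    rw [X_ge x (by linarith), Y_ge x h'', Z_ge _ (by linarith), X_ge _ (by linarith)]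

theorem mul_inv_apply_of_le (hY : IsDoubling s n Y) (u : ℝ ≃o ℝ) {t : ℝ} (ht : t ≤ n) :
    (u * Y⁻¹) t = u t := by
  rw [RelIso.mul_apply, inv_apply_eq_of_apply_eq (hY.apply_of_le t ht)]

theorem mul_inv_apply_of_mem (hY : IsDoubling s n Y) (u : ℝ ≃o ℝ) {t : ℝ}
    (ht : t ∈ Set.Icc (n : ℝ) (n + 2)) : (u * Y⁻¹) t = u ((t + n) / 2) := by
  have hYt : Y ((t + n) / 2) = t := by
    rw [hY.apply_of_mem _ ⟨by linarith [ht.1], by linarith [ht.2]⟩]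
    ring
  rw [RelIso.mul_apply, inv_apply_eq_of_apply_eq hYt]

theorem mul_inv_apply_of_ge (hs : IsShift Q s) (hY : IsDoubling s n Y) (u : ℝ ≃o ℝ) {t : ℝ}
    (ht : n + 2 ≤ t) (htQ : t ≤ Q - 1) : (u * Y⁻¹) t = u (t - 1) := by
  have hYt : Y (t - 1) = t := by
    rw [hY.apply_of_ge _ (by linarith), hs.apply_eq_add_one _ (by linarith), sub_add_cancel]
  rw [RelIso.mul_apply, inv_apply_eq_of_apply_eq hYt]

end IsDoubling

namespace IsPositive

variable {Q : ℤ} {s : ℝ ≃o ℝ} {A M : ℤ} {c : ℕ} {u : ℝ ≃o ℝ}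

theorem sub_le_sub (h : IsPositive Q s A M c u) {i j : ℤ} (hi : A ≤ i) (hij : i ≤ j) (hj : j ≤ M) :
    (j : ℝ) - i ≤ u j - u i := by
  induction j, hij using Int.leInduction with
  | base => simp
  | succ j hij ih =>
    obtain ⟨k, e, hk⟩ := h.affine j (by lia) (by lia)
    have one_le : (1 : ℝ) ≤ 2 ^ k := one_le_pow₀ one_le_two
    have := ih (by lia)
    rw [hk j (by simp)] at this
    push_cast
    rw [hk (j + 1) (by simp)]
    linarith

theorem apply_eq_self_or_exists_expanding (h : IsPositive Q s A M c u) :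
    (∀ x : ℝ, x ≤ M → u x = x) ∨ ∃ i : ℤ, A ≤ i ∧ i < M ∧ ∃ (k : ℕ) (e : ℤ),
      ∀ t ∈ Set.Icc (i : ℝ) (i + 1), u t = 2 ^ (k + 1) * t + e := by
  by_contra! hcon
  obtain ⟨⟨x, hxM, hx⟩, no_expanding⟩ := hcon
  suffices ∀ j : ℤ, A ≤ j → j ≤ M → ∀ x : ℝ, x ≤ j → u x = x from hx (this M h.le le_rfl x hxM)
  intro j hj hjM
  induction j, hj using Int.leInduction with
  | base => exact h.apply_of_le
  | succ j hj ih =>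
    intro x hx
    have left := ih (by lia)
    rcases le_total x j with hxj | hxj
    · exact left x hxj
    obtain ⟨k, e, hk⟩ := h.affine j hj (by lia)
    obtain rfl : k = 0 := by
      by_contra hk0
      obtain ⟨k, rfl⟩ := Nat.exists_eq_succ_of_ne_zero hk0
      obtain ⟨t, ht, hne⟩ := no_expanding j hj (by lia) k e
      exact hne (hk t ht)
    have e_eq := hk j (by simp)
    rw [left j le_rfl] at e_eq
    rw [hk x ⟨hxj, by exact_mod_cast hx⟩]
    linarith

theorem eq_one (h : IsPositive Q s A M 0 u) : u = 1 := by
  have right : ∀ x : ℝ, M ≤ x → u x = x := h.apply_of_ge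
  rcases h.apply_eq_self_or_exists_expanding with left | ⟨i, hAi, hiM, k, e, hk⟩
  · ext x
    exact (le_total x M).elim (left x) (right x)
  · have before := h.sub_le_sub le_rfl hAi hiM.le
    have after := h.sub_le_sub (by lia : A ≤ i + 1) (by lia) le_rfl
    have one_le : (1 : ℝ) ≤ 2 ^ k := one_le_pow₀ one_le_two
    push_cast at after
    rw [h.apply_of_le A le_rfl, hk i (by simp)] at before
    rw [right M le_rfl, hk (i + 1) (by simp)] at after
    linarith [pow_succ (2 : ℝ) k]

theorem exists_expanding (hs : IsShift Q s) (h : IsPositive Q s A M (c + 1) u) :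
    ∃ i : ℤ, A ≤ i ∧ i < M ∧ ∃ (k : ℕ) (e : ℤ),
      ∀ t ∈ Set.Icc (i : ℝ) (i + 1), u t = 2 ^ (k + 1) * t + e := by
  refine h.apply_eq_self_or_exists_expanding.resolve_left fun left => ?_
  have add_le : (M : ℝ) + (c + 1) ≤ Q - 2 := by exact_mod_cast h.add_le
  have hM := h.apply_of_ge M le_rfl
  rw [left M le_rfl, hs.pow_apply_eq_add _ (by push_cast; linarith)] at hM
  push_cast at hM
  linarith [c.cast_nonneg (α := ℝ)]

theorem mul_inv (hs : IsShift Q s) (h : IsPositive Q s A M (c + 1) u) {i : ℤ} (hAi : A ≤ i)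
    (hiM : i < M) {k : ℕ} {e : ℤ} (hk : ∀ t ∈ Set.Icc (i : ℝ) (i + 1), u t = 2 ^ (k + 1) * t + e)
    {Y : ℝ ≃o ℝ} (hY : IsDoubling s i Y) : IsPositive Q s A (M + 1) c (u * Y⁻¹) := by
  have add_le : (M : ℝ) + (c + 1) ≤ Q - 2 := by exact_mod_cast h.add_le
  have hiM' : (i : ℝ) + 1 ≤ M := by exact_mod_cast hiM
  have hAi' : (A : ℝ) ≤ i := by exact_mod_cast hAi
  have : (0 : ℝ) ≤ c := c.cast_nonneg
  have := h.add_le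
  refine ⟨by lia, by grind, fun x hx => ?_, fun x hx => ?_, fun j hj hjM => ?_⟩
  · rw [hY.mul_inv_apply_of_le u (by linarith), h.apply_of_le x hx]
  · push_cast at hx
    obtain ⟨y, rfl⟩ := s.surjective x
    rw [← hs.apply_eq_add_one M (by linarith), s.le_iff_le] at hx
    rw [RelIso.mul_apply, inv_apply_eq_of_apply_eq (hY.apply_of_ge y (by linarith)),
      h.apply_of_ge y hx, pow_succ, RelIso.mul_apply]
  rcases lt_or_ge j i with hji | hji
  · obtain ⟨l, d, hl⟩ := h.affine j hj (by lia)
    have : (j : ℝ) + 1 ≤ i := by exact_mod_cast hji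
    exact ⟨l, d, fun t ht => by
      rw [hY.mul_inv_apply_of_le u (by linarith [ht.2]), hl t ht]⟩
  have hji' : (i : ℝ) ≤ j := by exact_mod_cast hji
  rcases lt_or_ge j (i + 2) with hj2 | hj2
  · have : (j : ℝ) + 1 ≤ i + 2 := by exact_mod_cast hj2
    refine ⟨k, 2 ^ k * i + e, fun t ht => ?_⟩
    rw [hY.mul_inv_apply_of_mem u ⟨by linarith [ht.1], by linarith [ht.2]⟩,
      hk _ ⟨by linarith [ht.1], by linarith [ht.2]⟩, pow_succ]
    push_cast
    ring
  · have hj2' : (i : ℝ) + 2 ≤ j := by exact_mod_cast hj2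
    have hjM' : (j : ℝ) ≤ M := by exact_mod_cast (by lia : j ≤ M)
    obtain ⟨l, d, hl⟩ := h.affine (j - 1) (by lia) (by lia)
    push_cast at hl
    refine ⟨l, d - 2 ^ l, fun t ht => ?_⟩
    rw [hY.mul_inv_apply_of_ge hs u (by linarith [ht.1]) (by linarith [ht.2]),
      hl _ ⟨by linarith [ht.1], by linarith [ht.2]⟩]
    push_cast
    ring

end IsPositive

namespace IsPositive

variable {Q : ℤ} {s : ℝ ≃o ℝ} {A M : ℤ} {c : ℕ} {u : ℝ ≃o ℝ}

theorem mem_dyadicPLIoo (hs : IsShift Q s) (h : IsPositive Q s A M c u) (hu : u ∈ dyadicPL)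
    {p q : ℝ} (hp : p < A) (hq : Q < q) : u ∈ dyadicPLIoo p q := by
  refine mem_dyadicPLIoo_of_apply_eq_self hu hp hq fun x hx => ?_
  rcases le_or_gt x A with hA | hA
  · exact h.apply_of_le x hA
  have hxQ : Q ≤ x := not_lt.mp fun hxQ => hx ⟨hA, hxQ⟩
  have hMQ : (M : ℝ) ≤ Q := by exact_mod_cast (by linarith [h.add_le] : M ≤ Q)
  rw [h.apply_of_ge x (hMQ.trans hxQ), hs.pow_apply_eq_self c hxQ]

theorem mul_right (h : IsPositive Q s A M c u) {N : ℕ} {e : ℤ}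
    (hu : ∀ x ∈ Set.Icc (A : ℝ) M, u x = 2 ^ N * x + e) {g : ℝ ≃o ℝ}
    (g_fix : ∀ x ∉ Set.Ioo (A : ℝ) M, g x = x)
    (g_affine : ∀ i : ℤ, ∃ k d : ℤ, |k| ≤ N ∧
      ∀ t ∈ Set.Icc (i : ℝ) (i + 1), g t = 2 ^ k * t + d) :
    IsPositive Q s A M c (u * g) := by
  refine ⟨h.le, h.add_le, fun x hx => ?_, fun x hx => ?_, fun i hAi hiM => ?_⟩
  · rw [RelIso.mul_apply, g_fix x (by simp [hx]), h.apply_of_le x hx]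
  · rw [RelIso.mul_apply, g_fix x (by simp [hx]), h.apply_of_ge x hx]
  obtain ⟨k, d, hk, hg⟩ := g_affine i
  have hAi' : (A : ℝ) ≤ i := by exact_mod_cast hAi
  have hiM' : (i : ℝ) + 1 ≤ M := by exact_mod_cast hiM
  refine ⟨(N + k).toNat, 2 ^ N * d + e, fun t ht => ?_⟩
  have hgt : g t ∈ Set.Icc (A : ℝ) M := by
    rw [← g_fix A (by simp), ← g_fix M (by simp)]
    exact ⟨g.monotone (hAi'.trans ht.1), g.monotone (ht.2.trans hiM')⟩
  rw [RelIso.mul_apply, hu _ hgt, hg t ht, ← zpow_natCast (2 : ℝ) (N + k).toNat,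
    Int.toNat_of_nonneg (by grind), zpow_add₀ two_ne_zero, zpow_natCast]
  push_cast
  ring

end IsPositive

theorem exists_isPositive_dilation {Q A D : ℤ} {s : ℝ ≃o ℝ} {N c : ℕ} (hs : IsShift Q s)
    (hsPL : s ∈ dyadicPL) (hD : 0 ≤ D) (hc : c + D = 2 ^ N * D) (hQ : A + D + c ≤ Q - 2) :
    ∃ d ∈ dyadicPL, IsPositive Q s A (A + D) c d ∧
      ∀ x ∈ Set.Icc (A : ℝ) (A + D : ℤ), d x = 2 ^ N * x + (A - 2 ^ N * A : ℤ) := by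
  have hc' : (c : ℝ) + D = 2 ^ N * D := by exact_mod_cast hc
  have hQ' : (A : ℝ) + D + c ≤ Q - 2 := by exact_mod_cast hQ
  have hD' : (0 : ℝ) ≤ D := by exact_mod_cast hD
  obtain ⟨v, hv, vleft, vright⟩ := exists_mem_dyadicPL_glue (one_mem _)
    (affineIso_mem_dyadicPL N (.intCast (A - 2 ^ N * A))) (.intCast A)
    (by rw [affineIso_apply, zpow_natCast, RelIso.one_apply]; push_cast; ring)
  obtain ⟨d, hd, dleft, dright⟩ := exists_mem_dyadicPL_glue hv (pow_mem hsPL c)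
    (.intCast (A + D)) (by
      push_cast
      rw [vright _ (by linarith), hs.pow_apply_eq_add _ (by linarith), affineIso_apply,
        zpow_natCast]
      push_cast
      linarith)
  have d_mid : ∀ x ∈ Set.Icc (A : ℝ) (A + D : ℤ), d x = 2 ^ N * x + (A - 2 ^ N * A : ℤ) :=
    fun x hx => by rw [dleft x hx.2, vright x hx.1, affineIso_apply, zpow_natCast]
  refine ⟨d, hd, ⟨by lia, hQ, fun x hx => ?_, dright, fun i hAi hi => ⟨N, A - 2 ^ N * A,
    fun t ht => ?_⟩⟩, d_mid⟩
  · rw [dleft x (by push_cast; linarith), vleft x hx, RelIso.one_apply]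
  · exact d_mid t ⟨le_trans (by exact_mod_cast hAi) ht.1, ht.2.trans (by exact_mod_cast hi)⟩

theorem IsDoubling.mem_dyadicPLIoo {Q n : ℤ} {s X : ℝ ≃o ℝ} (hs : IsShift Q s)
    (hX : IsDoubling s n X) (hXPL : X ∈ dyadicPL) (hn : n ≤ Q - 3) {p q : ℝ} (hp : p < n)
    (hq : Q < q) : X ∈ dyadicPLIoo p q := by
  have hn' : (n : ℝ) ≤ Q - 3 := by exact_mod_cast hn
  refine mem_dyadicPLIoo_of_apply_eq_self hXPL hp hq fun x hx => ?_
  rcases le_or_gt x n with h | h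
  · exact hX.apply_of_le x h
  · have hxQ : Q ≤ x := not_lt.mp fun hxQ => hx ⟨h, hxQ⟩
    rw [hX.apply_of_ge x (by linarith), hs.apply_eq_self x hxQ]

section Abelianization

variable {Q A : ℤ} {s : ℝ ≃o ℝ}

theorem IsDoubling.abelianization_of_eq (hs : IsShift Q s) (hsPL : s ∈ dyadicPL) {n : ℤ}
    (hAn : A ≤ n) (hn : n ≤ Q - 3) {X Y : dyadicPLIoo (A - 2) (Q + 1)} (hX : IsDoubling s A X)
    (hY : IsDoubling s n Y) : Abelianization.of Y = Abelianization.of X := by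
  induction n, hAn using Int.leInduction generalizing Y with
  | base => rw [Subtype.ext (hX.eq hY)]
  | succ n hAn ih =>
    have hAn' : (A : ℝ) ≤ n := by exact_mod_cast hAn
    obtain ⟨U, hU, U_doubling⟩ := hs.exists_isDoubling hsPL (n := n - 1) (by lia)
    obtain ⟨V, hV, V_doubling⟩ := hs.exists_isDoubling hsPL (n := n) (by lia)
    lift U to dyadicPLIoo (A - 2) (Q + 1) using
      U_doubling.mem_dyadicPLIoo hs hU (by lia) (by push_cast; linarith) (lt_add_one _)
    lift V to dyadicPLIoo (A - 2) (Q + 1) using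
      V_doubling.mem_dyadicPLIoo hs hV (by lia) (by linarith) (lt_add_one _)
    have rel : Y * U = U * V := Subtype.ext (U_doubling.mul_eq_mul hs (by lia) V_doubling hY)
    have := congrArg Abelianization.of rel
    rw [map_mul, map_mul, mul_comm, mul_right_inj] at this
    rw [this, ih (by lia) V_doubling]

/-- Dividing a positive element of exponent `c + 1` on the right by a doubling leaves one of
exponent `c`, and all doublings agree in the abelianization. -/
theorem IsPositive.abelianization_of_eq (hs : IsShift Q s) (hsPL : s ∈ dyadicPL)
    {X : dyadicPLIoo (A - 2) (Q + 1)} (hX : IsDoubling s A X) {M : ℤ} {c : ℕ}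
    {u : dyadicPLIoo (A - 2) (Q + 1)} (hu : IsPositive Q s A M c u) :
    Abelianization.of u = Abelianization.of X ^ c := by
  induction c generalizing M u with
  | zero => rw [show u = 1 from Subtype.ext hu.eq_one, map_one, pow_zero]
  | succ c ih =>
    obtain ⟨i, hAi, hiM, k, e, hk⟩ := hu.exists_expanding hs
    have hiQ : i ≤ Q - 3 := by linarith [hu.add_le]
    have hAi' : (A : ℝ) ≤ i := by exact_mod_cast hAi
    obtain ⟨Y, hYPL, hY⟩ := hs.exists_isDoubling hsPL hiQ
    lift Y to dyadicPLIoo (A - 2) (Q + 1) using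
      hY.mem_dyadicPLIoo hs hYPL hiQ (by linarith) (lt_add_one _)
    have quotient_pos : IsPositive Q s A (M + 1) c (u * Y⁻¹ : dyadicPLIoo (A - 2) (Q + 1)) :=
      hu.mul_inv hs hAi hiM hk hY
    rw [← inv_mul_cancel_right u Y, map_mul, ih quotient_pos,
      hX.abelianization_of_eq hs hsPL hAi hiQ hY, pow_succ]

end Abelianization

theorem mem_commutator_self_of_abelianization_of_eq_one {G : Type*} [Group G] {H : Subgroup G}
    {h : H} (hh : Abelianization.of h = 1) : (h : G) ∈ ⁅H, H⁆ := by
  rw [← MonoidHom.mem_ker, Abelianization.ker_of] at hh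
  have := Subgroup.mem_map_of_mem H.subtype hh
  rwa [commutator_def, Subgroup.map_commutator, ← MonoidHom.range_eq_map,
    Subgroup.range_subtype] at this

theorem conj_mem_commutator {G : Type*} [Group G] {H K : Subgroup G} (g : G)
    (hg : ∀ x ∈ H, g * x * g⁻¹ ∈ K) {x : G} (hx : x ∈ ⁅H, H⁆) : g * x * g⁻¹ ∈ ⁅K, K⁆ := by
  have map_le : H.map (MulAut.conj g).toMonoidHom ≤ K := Subgroup.map_le_iff_le_comap.mpr hg
  have := Subgroup.mem_map_of_mem (MulAut.conj g).toMonoidHom hx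
  rw [Subgroup.map_commutator] at this
  exact Subgroup.commutator_mono map_le map_le this

theorem exists_mem_commutator_of_affine_unit {p q : ℝ} {h : ℝ ≃o ℝ} (hh : h ∈ dyadicPLIoo p q)
    {N : ℕ} (h_affine : ∀ i : ℤ, ∃ k c : ℤ, |k| ≤ N ∧
      ∀ t ∈ Set.Icc (i : ℝ) (i + 1), h t = 2 ^ k * t + c) :
    ∃ P Q, h ∈ ⁅dyadicPLIoo P Q, dyadicPLIoo P Q⁆ := by
  obtain ⟨A, hA⟩ := exists_int_lt p
  obtain ⟨D, hD⟩ := exists_nat_gt (q - A)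
  obtain ⟨c, hc⟩ : ∃ c : ℕ, c + D = 2 ^ N * D :=
    ⟨2 ^ N * D - D, Nat.sub_add_cancel (Nat.le_mul_of_pos_left _ (by positivity))⟩
  obtain ⟨Q, hQ⟩ : ∃ Q : ℤ, Q = A + D + c + 3 := ⟨_, rfl⟩
  obtain ⟨s, hsPL, hs⟩ := exists_isShift Q
  obtain ⟨X, hXPL, hX⟩ := hs.exists_isDoubling hsPL (n := A) (by lia)
  obtain ⟨d, hdPL, hd, d_mid⟩ := exists_isPositive_dilation hs hsPL (A := A) (D := D)
    (by positivity) (by exact_mod_cast hc) (by lia)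
  have h_fix : ∀ x ∉ Set.Ioo (A : ℝ) (A + D : ℤ), h x = x := fun x hx =>
    apply_eq_self_of_mem_dyadicPLIoo hh fun hx' =>
      hx ⟨hA.trans hx'.1, by push_cast; linarith [hx'.2]⟩
  have hdh := hd.mul_right d_mid h_fix h_affine
  have hA2 : (A : ℝ) - 2 < A := by linarith
  lift X to dyadicPLIoo (A - 2) (Q + 1) using
    hX.mem_dyadicPLIoo hs hXPL (by lia) hA2 (lt_add_one _)
  have h_mem : h ∈ dyadicPLIoo (A - 2) (Q + 1) := by
    have hAQ : (A : ℝ) + D ≤ Q := by exact_mod_cast (by lia : A + (D : ℤ) ≤ Q)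
    exact dyadicPLIoo_mono (by linarith) (by linarith) hh
  lift h to dyadicPLIoo (A - 2) (Q + 1) using h_mem
  lift d to dyadicPLIoo (A - 2) (Q + 1) using hd.mem_dyadicPLIoo hs hdPL hA2 (lt_add_one _)
  refine ⟨A - 2, Q + 1, mem_commutator_self_of_abelianization_of_eq_one ?_⟩
  have of_mul : Abelianization.of (d * h) = Abelianization.of X ^ c :=
    IsPositive.abelianization_of_eq hs hsPL hX hdh
  rwa [map_mul, hd.abelianization_of_eq hs hsPL hX, mul_eq_left] at of_mul

theorem exists_mem_commutator {p q : ℝ} {h : ℝ ≃o ℝ} (hh : h ∈ dyadicPLIoo p q) :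
    ∃ P Q, h ∈ ⁅dyadicPLIoo P Q, dyadicPLIoo P Q⁆ := by
  obtain ⟨N, hN⟩ := hh.1
  set D : ℝ ≃o ℝ := affineIso N 0
  have hD : D ∈ dyadicPL := affineIso_mem_dyadicPL _ .zero
  have D_apply : ∀ x, D x = 2 ^ N * x := fun x => by simp [D]
  obtain ⟨P, Q, hPQ⟩ := exists_mem_commutator_of_affine_unit (N := N)
    (conj_mem_dyadicPLIoo hh hD le_rfl le_rfl) fun i => by
      obtain ⟨k, c, hk, hl⟩ := hN i
      refine ⟨k, c, hk, fun t ht => ?_⟩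
      obtain ⟨y, rfl⟩ := D.surjective t
      rw [D_apply] at ht
      rw [RelIso.mul_apply, RelIso.mul_apply, RelIso.inv_apply_self, hl y ht, D_apply, D_apply]
      field_simp
  refine ⟨D⁻¹ P, D⁻¹ Q, ?_⟩
  have := conj_mem_commutator D⁻¹
    (fun x hx => conj_mem_dyadicPLIoo hx (inv_mem hD) le_rfl le_rfl) hPQ
  simpa [mul_assoc] using this

theorem commutator_dyadicPLIoo (p q : ℝ) :
    ⁅dyadicPLIoo p q, dyadicPLIoo p q⁆ = dyadicPLIoo p q := by
  refine le_antisymm (Subgroup.commutator_le_self _) fun h hh => ?_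
  rcases le_or_gt q p with hqp | hpq
  · rw [dyadicPLIoo_eq_bot hqp] at hh ⊢
    rw [Subgroup.mem_bot.mp hh]
    exact one_mem _
  obtain ⟨P, Q, hPQ⟩ := exists_mem_commutator hh
  obtain ⟨a, b, da, db, hpa, hab, hbq, h_fix⟩ := exists_isDyadic_support hpq hh
  obtain ⟨θ, hθ, θ_fix, hP, hQ⟩ := exists_mem_dyadicPL_squeeze (P := P) (Q := Q) hpa hab hbq da db
  have comm : Commute θ h := by
    have disj : Equiv.Perm.Disjoint θ.toEquiv h.toEquiv := fun x => by
      by_cases hx : x ∈ Set.Ioo a b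
      · exact .inl (θ_fix x (Set.Ioo_subset_Icc_self hx))
      · exact .inr (h_fix x hx)
    exact RelIso.ext fun x => DFunLike.congr_fun disj.commute.eq x
  have := conj_mem_commutator θ (fun x hx => conj_mem_dyadicPLIoo hx hθ hP hQ) hPQ
  rwa [comm.eq, mul_inv_cancel_right] at this

/-! ### Thompson's group and its commutator subgroup -/

section Germs

open Filter Topology
open scoped commutatorElement

theorem exists_eventually_nhdsGE_eq_affine {f : ℝ ≃o ℝ} (hf : f ∈ dyadicPL) (p : ℝ) :
    ∃ a : ℝ, ∀ᶠ t in 𝓝[≥] p, f t = a * (t - p) + f p := by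
  obtain ⟨N, hN⟩ := hf
  obtain ⟨k, c, -, hft⟩ := hN ⌊2 ^ N * p⌋
  have hp := hft p ⟨Int.floor_le _, (Int.lt_floor_add_one _).le⟩
  have lt : ∀ᶠ t : ℝ in 𝓝 p, 2 ^ N * t < ⌊2 ^ N * p⌋ + 1 :=
    (by fun_prop : Continuous fun t : ℝ => 2 ^ N * t).continuousAt.eventually_lt_const
      (Int.lt_floor_add_one _)
  refine ⟨2 ^ k, ?_⟩
  filter_upwards [self_mem_nhdsWithin, nhdsWithin_le_nhds lt] with t hpt ht
  rw [hft t ⟨(Int.floor_le _).trans (by gcongr; exact hpt), ht.le⟩, hp]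
  ring

theorem exists_eventually_nhdsLE_eq_affine {f : ℝ ≃o ℝ} (hf : f ∈ dyadicPL) (p : ℝ) :
    ∃ a : ℝ, ∀ᶠ t in 𝓝[≤] p, f t = a * (t - p) + f p := by
  obtain ⟨N, hN⟩ := hf
  obtain ⟨k, c, -, hft⟩ := hN (⌈2 ^ N * p⌉ - 1)
  push_cast at hft
  rw [sub_add_cancel] at hft
  have hlt : ⌈2 ^ N * p⌉ - 1 < 2 ^ N * p := by linarith [Int.ceil_lt_add_one (2 ^ N * p)]
  have hp := hft p ⟨hlt.le, Int.le_ceil _⟩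
  have lt : ∀ᶠ t : ℝ in 𝓝 p, ⌈2 ^ N * p⌉ - 1 < 2 ^ N * t :=
    (by fun_prop : Continuous fun t : ℝ => 2 ^ N * t).continuousAt.eventually_const_lt hlt
  refine ⟨2 ^ k, ?_⟩
  filter_upwards [self_mem_nhdsWithin, nhdsWithin_le_nhds lt] with t hpt ht
  rw [hft t ⟨ht.le, le_trans (by gcongr; exact hpt) (Int.le_ceil _)⟩, hp]
  ring

theorem tendsto_nhdsGE_of_apply_eq_self {f : ℝ ≃o ℝ} {p : ℝ} (h : f p = p) :
    Tendsto f (𝓝[≥] p) (𝓝[≥] p) := by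
  have := f.continuous.continuousWithinAt.tendsto_nhdsWithin (s := Set.Ici p) (t := Set.Ici p)
    (x := p) fun x hx => by rw [Set.mem_Ici, ← h]; exact f.monotone hx
  rwa [h] at this

theorem tendsto_nhdsLE_of_apply_eq_self {f : ℝ ≃o ℝ} {p : ℝ} (h : f p = p) :
    Tendsto f (𝓝[≤] p) (𝓝[≤] p) := by
  have := f.continuous.continuousWithinAt.tendsto_nhdsWithin (s := Set.Iic p) (t := Set.Iic p)
    (x := p) fun x hx => by rw [Set.mem_Iic, ← h]; exact f.monotone hx
  rwa [h] at this

theorem eventually_commutatorElement_apply_eq_self {l : Filter ℝ} {f g : ℝ ≃o ℝ} {a b p : ℝ}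
    (hf : Tendsto f l l) (hg : Tendsto g l l) (hf' : Tendsto (f⁻¹ : ℝ ≃o ℝ) l l)
    (hg' : Tendsto (g⁻¹ : ℝ ≃o ℝ) l l) (hfa : ∀ᶠ t in l, f t = a * (t - p) + p)
    (hgb : ∀ᶠ t in l, g t = b * (t - p) + p) : ∀ᶠ t in l, ⁅f, g⁆ t = t := by
  have comm : ∀ᶠ t in l, f (g t) = g (f t) := by
    filter_upwards [hfa, hgb, hg.eventually hfa, hf.eventually hgb] with t h₁ h₂ h₃ h₄
    rw [h₃, h₄, h₁, h₂]
    ring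
  filter_upwards [(hf'.comp hg').eventually comm] with t ht
  simpa [commutatorElement_def] using ht

theorem eventually_nhdsGE_commutatorElement_apply_eq_self {f g : ℝ ≃o ℝ} (hf : f ∈ dyadicPL)
    (hg : g ∈ dyadicPL) {p : ℝ} (hfp : f p = p) (hgp : g p = p) :
    ∀ᶠ t in 𝓝[≥] p, ⁅f, g⁆ t = t := by
  obtain ⟨a, hfa⟩ := exists_eventually_nhdsGE_eq_affine hf p
  obtain ⟨b, hgb⟩ := exists_eventually_nhdsGE_eq_affine hg p
  rw [hfp] at hfa
  rw [hgp] at hgb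
  exact eventually_commutatorElement_apply_eq_self (tendsto_nhdsGE_of_apply_eq_self hfp)
    (tendsto_nhdsGE_of_apply_eq_self hgp)
    (tendsto_nhdsGE_of_apply_eq_self (inv_apply_eq_of_apply_eq hfp))
    (tendsto_nhdsGE_of_apply_eq_self (inv_apply_eq_of_apply_eq hgp)) hfa hgb

theorem eventually_nhdsLE_commutatorElement_apply_eq_self {f g : ℝ ≃o ℝ} (hf : f ∈ dyadicPL)
    (hg : g ∈ dyadicPL) {p : ℝ} (hfp : f p = p) (hgp : g p = p) :
    ∀ᶠ t in 𝓝[≤] p, ⁅f, g⁆ t = t := by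
  obtain ⟨a, hfa⟩ := exists_eventually_nhdsLE_eq_affine hf p
  obtain ⟨b, hgb⟩ := exists_eventually_nhdsLE_eq_affine hg p
  rw [hfp] at hfa
  rw [hgp] at hgb
  exact eventually_commutatorElement_apply_eq_self (tendsto_nhdsLE_of_apply_eq_self hfp)
    (tendsto_nhdsLE_of_apply_eq_self hgp)
    (tendsto_nhdsLE_of_apply_eq_self (inv_apply_eq_of_apply_eq hfp))
    (tendsto_nhdsLE_of_apply_eq_self (inv_apply_eq_of_apply_eq hgp)) hfa hgb

theorem mem_dyadicPLIoo_of_eventually {f : ℝ ≃o ℝ} (hf : f ∈ dyadicPL) {p q : ℝ}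
    (h : ∀ x ∉ Set.Ioo p q, f x = x) (hp : ∀ᶠ t in 𝓝[≥] p, f t = t)
    (hq : ∀ᶠ t in 𝓝[≤] q, f t = t) : f ∈ dyadicPLIoo p q := by
  obtain ⟨α, hα, f_left⟩ := mem_nhdsGE_iff_exists_Icc_subset.mp hp
  obtain ⟨β, hβ, f_right⟩ := mem_nhdsLE_iff_exists_Icc_subset.mp hq
  refine ⟨hf, α, β, hα, hβ, fun x hx => ?_⟩
  have hx' : x ∈ Set.Ioo p q := by_contra fun h' => hx (h x h')
  exact ⟨le_of_not_ge fun hxα => hx (f_left ⟨hx'.1.le, hxα⟩),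
    le_of_not_ge fun hβx => hx (f_right ⟨hβx, hx'.2.le⟩)⟩

end Germs

theorem InThompsonF.apply_eq_self {f : ℝ ≃o ℝ} (hf : InThompsonF f) {x : ℝ}
    (hx : x ∉ Set.Ioo (0 : ℝ) 1) : f x = x := by
  have h : x ∈ closure (Set.Icc (0 : ℝ) 1)ᶜ := by rwa [closure_compl, interior_Icc]
  exact closure_minimal (t := {x | f x = x}) (fun y hy => hf.1 y hy)
    (isClosed_eq f.continuous continuous_id) h

theorem InThompsonF.mem_dyadicPL {f : ℝ ≃o ℝ} (hf : InThompsonF f) : f ∈ dyadicPL := by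
  obtain ⟨-, m, x, x_zero, x_last, x_mono, dx, f_affine⟩ := id hf
  have initial_piece (i : Fin (m + 1)) : ∃ u ∈ dyadicPL, ∀ t ≤ x i, u t = f t := by
    induction i using Fin.induction with
    | zero =>
      refine ⟨1, one_mem _, fun t ht => Eq.symm (hf.apply_eq_self (x := t) fun h => ?_)⟩
      linarith [h.1]
    | succ i ih =>
      obtain ⟨u, hu, u_eq⟩ := ih
      obtain ⟨k, c, f_eq⟩ := f_affine i
      have f_left : f (x i.castSucc) = 2 ^ k * x i.castSucc + c :=
        f_eq _ ⟨le_rfl, (x_mono Fin.castSucc_lt_succ).le⟩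
      have dc : IsDyadic c := by
        rw [← u_eq _ le_rfl, ← sub_eq_iff_eq_add'] at f_left
        exact f_left ▸ ((dx _).apply hu).sub ((dx _).zpow_mul k)
      obtain ⟨v, hv, left, right⟩ := exists_mem_dyadicPL_glue hu (affineIso_mem_dyadicPL k dc)
        (dx i.castSucc) (by rw [u_eq _ le_rfl, f_left, affineIso_apply])
      refine ⟨v, hv, fun t ht => ?_⟩
      rcases le_total t (x i.castSucc) with h | h
      · rw [left t h, u_eq t h]
      · rw [right t h, affineIso_apply, f_eq t ⟨h, ht⟩]
  obtain ⟨u, hu, u_eq⟩ := initial_piece (Fin.last m)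
  rw [x_last] at u_eq
  exact mem_dyadicPL_of_eq_of_eq hu (one_mem _) .one (fun t ht => (u_eq t ht).symm)
    fun t ht => hf.apply_eq_self (by grind)

theorem inThompsonF_of_mem_dyadicPL {f : ℝ ≃o ℝ} (hf : f ∈ dyadicPL)
    (h : ∀ x ∉ Set.Icc (0 : ℝ) 1, f x = x) : InThompsonF f := by
  obtain ⟨N, hN⟩ := hf
  have hN0 : (0 : ℝ) < 2 ^ N := by positivity
  refine ⟨h, 2 ^ N, fun i => (i : ℕ) / 2 ^ N, by simp, by simp, fun i j hij => ?_,
    fun i => ⟨(i : ℕ), N, by simp⟩, fun i => ?_⟩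
  · exact div_lt_div_of_pos_right (by exact_mod_cast hij) hN0
  · obtain ⟨k, c, -, hft⟩ := hN (i : ℕ)
    refine ⟨k, c / 2 ^ N, fun t ht => hft t ?_⟩
    rw [Set.mem_Icc, div_le_iff₀' hN0, le_div_iff₀' hN0] at ht
    simpa using ht

theorem inThompsonF_of_mem_dyadicPLIoo {f : ℝ ≃o ℝ} (hf : f ∈ dyadicPLIoo 0 1) : InThompsonF f :=
  inThompsonF_of_mem_dyadicPL hf.1 fun _ hx =>
    apply_eq_self_of_mem_dyadicPLIoo hf fun hx' => hx (Set.Ioo_subset_Icc_self hx')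

open scoped commutatorElement in
theorem InThompsonF.commutatorElement_mem_dyadicPLIoo {f g : ℝ ≃o ℝ} (hf : InThompsonF f)
    (hg : InThompsonF g) : ⁅f, g⁆ ∈ dyadicPLIoo 0 1 := by
  have f_zero : f 0 = 0 := hf.apply_eq_self (by simp)
  have f_one : f 1 = 1 := hf.apply_eq_self (by simp)
  have g_zero : g 0 = 0 := hg.apply_eq_self (by simp)
  have g_one : g 1 = 1 := hg.apply_eq_self (by simp)
  have hf' := hf.mem_dyadicPL
  have hg' := hg.mem_dyadicPL
  refine mem_dyadicPLIoo_of_eventually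
    (mul_mem (mul_mem (mul_mem hf' hg') (inv_mem hf')) (inv_mem hg')) (fun x hx => ?_)
    (eventually_nhdsGE_commutatorElement_apply_eq_self hf' hg' f_zero g_zero)
    (eventually_nhdsLE_commutatorElement_apply_eq_self hf' hg' f_one g_one)
  have hfx := hf.apply_eq_self hx
  have hgx := hg.apply_eq_self hx
  rw [RelIso.mul_apply, RelIso.mul_apply, RelIso.mul_apply,
    inv_apply_eq_of_apply_eq hgx, inv_apply_eq_of_apply_eq hfx, hgx, hfx]

theorem map_commutator_eq_dyadicPLIoo {F : Subgroup (ℝ ≃o ℝ)}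
    (hF : ∀ f : ℝ ≃o ℝ, f ∈ F ↔ InThompsonF f) :
    (commutator F).map F.subtype = dyadicPLIoo 0 1 := by
  rw [commutator_def, Subgroup.map_commutator, ← MonoidHom.range_eq_map, Subgroup.range_subtype]
  refine le_antisymm (Subgroup.commutator_le.mpr fun f hf g hg =>
    ((hF f).mp hf).commutatorElement_mem_dyadicPLIoo ((hF g).mp hg)) ?_
  have le : dyadicPLIoo 0 1 ≤ F := fun f hf => (hF f).mpr (inThompsonF_of_mem_dyadicPLIoo hf)
  exact (commutator_dyadicPLIoo 0 1).ge.trans (Subgroup.commutator_mono le le)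

theorem inH_of_mem_dyadicPLIoo {f : ℝ ≃o ℝ} (hf : f ∈ dyadicPLIoo 0 1) : InH f := by
  obtain ⟨-, α, β, hα, hβ, f_supp⟩ := id hf
  have f_fix : ∀ t ∉ Set.Icc α β, f t = t := fun t ht => by_contra fun h => ht (f_supp t h)
  refine ⟨inThompsonF_of_mem_dyadicPLIoo hf, 0, min (α / 2) ((1 - β) / 2), by grind,
    fun t ht => ?_, fun t ht => ?_⟩
  · rw [f_fix t (by grind), zpow_zero, one_mul]
  · rw [f_fix t (by grind), zpow_zero]
    ring

theorem nonempty_mulEquiv_dyadicPLIoo {a b c d : ℝ} (ha : IsDyadic a) (hb : IsDyadic b)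
    (hc : IsDyadic c) (hd : IsDyadic d) (hab : a < b) (hcd : c < d) :
    Nonempty (dyadicPLIoo a b ≃* dyadicPLIoo c d) := by
  obtain ⟨θ, hθ, θa, θb⟩ := exists_mem_dyadicPL_map_map ha hb hc hd hab hcd
  have map_conj : (dyadicPLIoo a b).map (MulAut.conj θ).toMonoidHom = dyadicPLIoo c d := by
    refine le_antisymm ?_ fun f hf => ?_
    · rintro _ ⟨f, hf, rfl⟩
      exact conj_mem_dyadicPLIoo hf hθ θa.ge θb.le
    · refine ⟨θ⁻¹ * f * θ⁻¹⁻¹, conj_mem_dyadicPLIoo hf (inv_mem hθ)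
        (inv_apply_eq_of_apply_eq θa).ge (inv_apply_eq_of_apply_eq θb).le, ?_⟩
      simp [mul_assoc]
  exact ⟨((MulAut.conj θ).subgroupMap _).trans (MulEquiv.subgroupCongr map_conj)⟩

/-! ### Integral isometries of the line -/

/-- The isometries `x ↦ ±x + n` of `ℝ` with `n ∈ ℤ`; these are the isometries that preserve both
`ℤ` and the dyadic structure of `ℝ`. -/
@[ext]
structure IntIsom where
  /-- The sign of the linear part. -/
  sign : ℤˣ
  /-- The image of `0`. -/
  shift : ℤ

namespace IntIsom

instance : Mul IntIsom := ⟨fun γ κ => ⟨γ.sign * κ.sign, γ.sign * κ.shift + γ.shift⟩⟩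
instance : One IntIsom := ⟨⟨1, 0⟩⟩
instance : Inv IntIsom := ⟨fun γ => ⟨γ.sign, -(γ.sign * γ.shift)⟩⟩

@[simp] theorem sign_mul (γ κ : IntIsom) : (γ * κ).sign = γ.sign * κ.sign := rfl
@[simp] theorem shift_mul (γ κ : IntIsom) : (γ * κ).shift = γ.sign * κ.shift + γ.shift := rfl
@[simp] theorem sign_one : (1 : IntIsom).sign = 1 := rfl
@[simp] theorem shift_one : (1 : IntIsom).shift = 0 := rfl
@[simp] theorem sign_inv (γ : IntIsom) : γ⁻¹.sign = γ.sign := rfl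
@[simp] theorem shift_inv (γ : IntIsom) : γ⁻¹.shift = -(γ.sign * γ.shift) := rfl

instance : Group IntIsom :=
  Group.ofLeftAxioms (fun γ κ η => IntIsom.ext (by simp [mul_assoc]) (by simp; ring))
    (fun γ => IntIsom.ext (by simp) (by simp))
    (fun γ => IntIsom.ext (Int.units_mul_self _) (by simp))

instance : MulAction IntIsom ℝ where
  smul γ x := (γ.sign : ℤ) * x + γ.shift
  one_smul x := by change ((1 : ℤ) : ℝ) * x + (0 : ℤ) = x; simp
  mul_smul γ κ x := by
    change (((γ.sign * κ.sign : ℤˣ) : ℤ) : ℝ) * x + ((γ.sign * κ.shift + γ.shift : ℤ) : ℝ) =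
      (γ.sign : ℤ) * ((κ.sign : ℤ) * x + κ.shift) + γ.shift
    push_cast
    ring

/-- The action on half-integers, where `l : ℤ` encodes the half-integer `l / 2`. -/
instance : MulAction IntIsom ℤ where
  smul γ l := γ.sign * l + 2 * γ.shift
  one_smul l := by change ((1 : ℤˣ) : ℤ) * l + 2 * 0 = l; simp
  mul_smul γ κ l := by
    change ((γ.sign * κ.sign : ℤˣ) : ℤ) * l + 2 * (γ.sign * κ.shift + γ.shift) =
      γ.sign * (κ.sign * l + 2 * κ.shift) + 2 * γ.shift
    push_cast
    ring

theorem smul_real (γ : IntIsom) (x : ℝ) : γ • x = (γ.sign : ℤ) * x + γ.shift := rfl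

theorem smul_int (γ : IntIsom) (l : ℤ) : γ • l = γ.sign * l + 2 * γ.shift := rfl

theorem smul_half (γ : IntIsom) (l : ℤ) : γ • ((l : ℝ) / 2) = ((γ • l : ℤ) : ℝ) / 2 := by
  rw [smul_real, smul_int]
  push_cast
  ring

instance : IsIsometricSMul IntIsom ℝ where
  isometry_smul γ := Isometry.of_dist_eq fun x y => by
    rcases Int.units_eq_one_or γ.sign with h | h
    · simp [smul_real, h]
    · simp only [smul_real, h, Units.val_neg, Units.val_one, Int.cast_neg, Int.cast_one, neg_mul,
        one_mul, dist_add_right, dist_neg_neg]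

theorem isDyadic_smul (γ : IntIsom) {x : ℝ} (hx : IsDyadic x) : IsDyadic (γ • x) := by
  rw [smul_real]
  rcases Int.units_eq_one_or γ.sign with h | h
  · simpa [h] using hx.add (.intCast γ.shift)
  · simpa [h] using hx.neg.add (.intCast γ.shift)

/-- The conjugate `x ↦ k • h (k⁻¹ • x)`. -/
def conj (k : IntIsom) (h : ℝ ≃o ℝ) : ℝ ≃o ℝ where
  toEquiv := (MulAction.toPerm k)⁻¹.trans (h.toEquiv.trans (MulAction.toPerm k))
  map_rel_iff' {x y} := by
    change k • h (k⁻¹ • x) ≤ k • h (k⁻¹ • y) ↔ x ≤ y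
    rcases Int.units_eq_one_or k.sign with hk | hk
    · simp [smul_real, hk]
    · simp only [smul_real, sign_inv, hk, Units.val_neg, Units.val_one, Int.cast_neg,
        Int.cast_one, neg_mul, one_mul, add_le_add_iff_right, neg_le_neg_iff, h.le_iff_le]

theorem conj_apply (k : IntIsom) (h : ℝ ≃o ℝ) (x : ℝ) : conj k h x = k • h (k⁻¹ • x) := rfl

theorem isMeshPL_conj (k : IntIsom) {h : ℝ ≃o ℝ} {N : ℕ} (hh : IsMeshPL N h) :
    IsMeshPL N (conj k h) := by
  intro i
  obtain ⟨j, hj⟩ : ∃ j : ℤ, ∀ t : ℝ, 2 ^ N * t ∈ Set.Icc (i : ℝ) (i + 1) →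
      2 ^ N * (k⁻¹ • t) ∈ Set.Icc (j : ℝ) (j + 1) := by
    rcases Int.units_eq_one_or k.sign with hk | hk
    · refine ⟨i - 2 ^ N * k.shift, fun t ht => ?_⟩
      simp only [smul_real, sign_inv, shift_inv, hk, Set.mem_Icc] at ht ⊢
      push_cast
      constructor <;> linarith
    · refine ⟨2 ^ N * k.shift - i - 1, fun t ht => ?_⟩
      simp only [smul_real, sign_inv, shift_inv, hk, Set.mem_Icc] at ht ⊢
      push_cast
      constructor <;> linarith
  obtain ⟨a, c, ha, ht⟩ := hh j
  obtain ⟨z, hz, -⟩ := exists_int_eq_two_zpow (n := a + N) (by grind)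
  rw [zpow_add₀ two_ne_zero, zpow_natCast] at hz
  refine ⟨a, k.sign * c + 2 ^ N * k.shift - z * k.shift, ha, fun t htI => ?_⟩
  rw [conj_apply, ht _ (hj t htI), smul_real k, smul_real k⁻¹, sign_inv, shift_inv]
  have sq : ((k.sign : ℤ) : ℝ) * (k.sign : ℤ) = 1 := by
    rw [← Int.cast_mul, Int.units_coe_mul_self, Int.cast_one]
  push_cast
  rw [hz]
  field_simp
  linear_combination (2 ^ a * 2 ^ N * t - 2 ^ a * 2 ^ N * k.shift : ℝ) * sq

end IntIsom

theorem mem_Ioo_iff_dist_lt {p q x : ℝ} : x ∈ Set.Ioo p q ↔ dist x ((p + q) / 2) < (q - p) / 2 := by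
  rw [Real.Ioo_eq_ball, Metric.mem_ball]

theorem smul_mem_Ioo_iff {k : IntIsom} {p q p' q' x : ℝ} (hk : k • ((p + q) / 2) = (p' + q') / 2)
    (hlen : q' - p' = q - p) : k • x ∈ Set.Ioo p' q' ↔ x ∈ Set.Ioo p q := by
  rw [mem_Ioo_iff_dist_lt, mem_Ioo_iff_dist_lt, ← hk, dist_smul, hlen]

theorem mem_dyadicPLIoo_iff_dist_le {p q : ℝ} {f : ℝ ≃o ℝ} : f ∈ dyadicPLIoo p q ↔
    f ∈ dyadicPL ∧ ∃ ℓ < (q - p) / 2, ∀ x, f x ≠ x → dist x ((p + q) / 2) ≤ ℓ := by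
  constructor
  · rintro ⟨hf, α, β, hα, hβ, f_supp⟩
    refine ⟨hf, max ((p + q) / 2 - α) (β - (p + q) / 2), by grind, fun x hx => ?_⟩
    rw [Real.dist_eq]
    grind
  · rintro ⟨hf, ℓ, hℓ, f_supp⟩
    refine ⟨hf, (p + q) / 2 - ℓ, (p + q) / 2 + ℓ, by linarith, by linarith, fun x hx => ?_⟩
    rw [← Real.closedBall_eq_Icc]
    exact f_supp x hx

theorem IntIsom.conj_mem_dyadicPLIoo {p q p' q' : ℝ} {k : IntIsom} {h : ℝ ≃o ℝ}
    (hh : h ∈ dyadicPLIoo p q) (hk : k • ((p + q) / 2) = (p' + q') / 2) (hlen : q' - p' = q - p) :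
    k.conj h ∈ dyadicPLIoo p' q' := by
  obtain ⟨⟨N, hN⟩, ℓ, hℓ, h_supp⟩ := mem_dyadicPLIoo_iff_dist_le.mp hh
  refine mem_dyadicPLIoo_iff_dist_le.mpr ⟨⟨N, k.isMeshPL_conj hN⟩, ℓ, hlen ▸ hℓ, fun x hx => ?_⟩
  obtain ⟨y, rfl⟩ := MulAction.surjective k x
  rw [conj_apply, inv_smul_smul] at hx
  rw [← hk, dist_smul]
  exact h_supp y fun h => hx (congrArg _ h)

/-! ### Homeomorphisms acting in a family of frames -/

/-- `g` acts as `h γ` on the image of `(p, q)` under each isometry `γ` in `S` (the frames) and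
trivially outside these images. -/
structure ActsInFrames (S : Set IntIsom) (p q : ℝ) (h : IntIsom → (ℝ ≃o ℝ)) (g : ℝ ≃o ℝ) :
    Prop where
  apply_smul : ∀ γ ∈ S, ∀ x ∈ Set.Ioo p q, g (γ • x) = γ • h γ x
  apply_of_forall_ne : ∀ y, (∀ γ ∈ S, ∀ x ∈ Set.Ioo p q, γ • x ≠ y) → g y = y

theorem apply_mem_Ioo {h : ℝ ≃o ℝ} {p q x : ℝ} (hp : h p = p) (hq : h q = q)
    (hx : x ∈ Set.Ioo p q) : h x ∈ Set.Ioo p q :=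
  ⟨hp ▸ h.strictMono hx.1, hq ▸ h.strictMono hx.2⟩

/-- The images of `(p, q)` under the isometries in `S` are pairwise disjoint. -/
def DisjointTranslates (S : Set IntIsom) (p q : ℝ) : Prop :=
  ∀ γ ∈ S, ∀ γ' ∈ S, ∀ x ∈ Set.Ioo p q, ∀ x' ∈ Set.Ioo p q, γ • x = γ' • x' → γ = γ'

theorem DisjointTranslates.mono {S T : Set IntIsom} {p q : ℝ} (hT : DisjointTranslates T p q)
    (hST : S ⊆ T) : DisjointTranslates S p q :=
  fun γ hγ γ' hγ' => hT γ (hST hγ) γ' (hST hγ')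

namespace ActsInFrames

variable {S : Set IntIsom} {p q p' q' : ℝ} {h h' : IntIsom → (ℝ ≃o ℝ)} {f g g' : ℝ ≃o ℝ}

theorem mul (hg : ActsInFrames S p q h g) (hg' : ActsInFrames S p q h' g')
    (hp : ∀ γ ∈ S, h' γ p = p) (hq : ∀ γ ∈ S, h' γ q = q) :
    ActsInFrames S p q (h * h') (g * g') where
  apply_smul γ hγ x hx := by
    rw [RelIso.mul_apply, hg'.apply_smul γ hγ x hx,
      hg.apply_smul γ hγ _ (apply_mem_Ioo (hp γ hγ) (hq γ hγ) hx), Pi.mul_apply, RelIso.mul_apply]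
  apply_of_forall_ne y hy := by
    rw [RelIso.mul_apply, hg'.apply_of_forall_ne y hy, hg.apply_of_forall_ne y hy]

theorem inv (hg : ActsInFrames S p q h g) (hp : ∀ γ ∈ S, h γ p = p) (hq : ∀ γ ∈ S, h γ q = q) :
    ActsInFrames S p q h⁻¹ g⁻¹ where
  apply_smul γ hγ x hx := inv_apply_eq_of_apply_eq <| by
    rw [Pi.inv_apply, hg.apply_smul γ hγ _ (apply_mem_Ioo (inv_apply_eq_of_apply_eq (hp γ hγ))
      (inv_apply_eq_of_apply_eq (hq γ hγ)) hx), RelIso.apply_inv_self]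
  apply_of_forall_ne y hy := inv_apply_eq_of_apply_eq (hg.apply_of_forall_ne y hy)

theorem restrict (hg : ActsInFrames S p q (fun _ => f) g) (hp : p ≤ p') (hq : q' ≤ q)
    (f_fix : ∀ x ∉ Set.Ioo p' q', f x = x) : ActsInFrames S p' q' (fun _ => f) g where
  apply_smul γ hγ x hx := hg.apply_smul γ hγ x (Set.Ioo_subset_Ioo hp hq hx)
  apply_of_forall_ne y hy := by
    by_cases! hit : ∀ γ ∈ S, ∀ x ∈ Set.Ioo p q, γ • x ≠ y
    · exact hg.apply_of_forall_ne y hit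
    · obtain ⟨γ, hγ, x, hx, rfl⟩ := hit
      rw [hg.apply_smul γ hγ x hx, f_fix x fun hx' => hy γ hγ x hx' rfl]

theorem extend (hg : ActsInFrames S p' q' (fun _ => f) g) (hd : DisjointTranslates S p q)
    (hp : p ≤ p') (hq : q' ≤ q) (f_fix : ∀ x ∉ Set.Ioo p' q', f x = x) :
    ActsInFrames S p q (fun _ => f) g where
  apply_smul γ hγ x hx := by
    by_cases hx' : x ∈ Set.Ioo p' q'
    · exact hg.apply_smul γ hγ x hx'
    · rw [f_fix x hx', hg.apply_of_forall_ne]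
      intro γ' hγ' z hz heq
      obtain rfl := hd γ' hγ' γ hγ z (Set.Ioo_subset_Ioo hp hq hz) x hx heq
      exact hx' (smul_left_cancel _ heq ▸ hz)
  apply_of_forall_ne y hy := hg.apply_of_forall_ne y fun γ hγ x hx =>
    hy γ hγ x (Set.Ioo_subset_Ioo hp hq hx)

end ActsInFrames

theorem actsInFrames_mulIndicator_iff {S T : Set IntIsom} {p q : ℝ} {h : IntIsom → (ℝ ≃o ℝ)}
    {g : ℝ ≃o ℝ} (hd : DisjointTranslates T p q) (hST : S ⊆ T) :
    ActsInFrames T p q (S.mulIndicator h) g ↔ ActsInFrames S p q h g := by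
  refine ⟨fun hg => ⟨fun γ hγ x hx => ?_, fun y hy => ?_⟩, fun hg => ⟨fun γ hγ x hx => ?_,
    fun y hy => hg.apply_of_forall_ne y fun γ hγ => hy γ (hST hγ)⟩⟩
  · rw [hg.apply_smul γ (hST hγ) x hx, Set.mulIndicator_of_mem hγ]
  · by_cases! hit : ∀ γ ∈ T, ∀ x ∈ Set.Ioo p q, γ • x ≠ y
    · exact hg.apply_of_forall_ne y hit
    · obtain ⟨γ, hγ, x, hx, rfl⟩ := hit
      rw [hg.apply_smul γ hγ x hx,
        Set.mulIndicator_of_notMem (fun hγS => hy γ hγS x hx rfl), RelIso.one_apply]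
  · by_cases hγS : γ ∈ S
    · rw [hg.apply_smul γ hγS x hx, Set.mulIndicator_of_mem hγS]
    · rw [Set.mulIndicator_of_notMem hγS, RelIso.one_apply]
      exact hg.apply_of_forall_ne _ fun γ' hγ' x' hx' heq =>
        hγS (hd γ' (hST hγ') γ hγ x' hx' x hx heq ▸ hγ')

/-- The pairs `(h, g)` such that each `h γ` with `γ ∈ S` preserves `[p, q]` and `g` acts by the
family `h` in the frames of `S`. -/
def framewise (S : Set IntIsom) (p q : ℝ) : Subgroup ((IntIsom → (ℝ ≃o ℝ)) × (ℝ ≃o ℝ)) where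
  carrier := {x | (∀ γ ∈ S, x.1 γ p = p ∧ x.1 γ q = q) ∧ ActsInFrames S p q x.1 x.2}
  one_mem' := ⟨fun _ _ => ⟨rfl, rfl⟩, fun _ _ _ _ => rfl, fun _ _ => rfl⟩
  mul_mem' := fun {x y} ⟨hx, hxS⟩ ⟨hy, hyS⟩ =>
    ⟨fun γ hγ => by simp [hx γ hγ, hy γ hγ],
      hxS.mul hyS (fun γ hγ => (hy γ hγ).1) fun γ hγ => (hy γ hγ).2⟩
  inv_mem' := fun {x} ⟨hx, hxS⟩ =>
    ⟨fun γ hγ => ⟨inv_apply_eq_of_apply_eq (hx γ hγ).1, inv_apply_eq_of_apply_eq (hx γ hγ).2⟩,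
      hxS.inv (fun γ hγ => (hx γ hγ).1) fun γ hγ => (hx γ hγ).2⟩

theorem mulIndicator_mem_framewise_iff {S T : Set IntIsom} {p q : ℝ} {h : IntIsom → (ℝ ≃o ℝ)}
    {g : ℝ ≃o ℝ} (hd : DisjointTranslates T p q) (hST : S ⊆ T) :
    (S.mulIndicator h, g) ∈ framewise T p q ↔ (h, g) ∈ framewise S p q := by
  refine and_congr ⟨fun H γ hγ => ?_, fun H γ _ => ?_⟩ (actsInFrames_mulIndicator_iff hd hST)
  · simpa only [Set.mulIndicator_of_mem hγ] using H γ (hST hγ)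
  · by_cases hγ : γ ∈ S
    · simpa only [Set.mulIndicator_of_mem hγ] using H γ hγ
    · simp [Set.mulIndicator_of_notMem hγ]

/-- The homeomorphisms of `[p, q]` that some element of `G` performs simultaneously in all frames
of `S`. -/
def realized (G : Subgroup (ℝ ≃o ℝ)) (S : Set IntIsom) (p q : ℝ) : Subgroup (ℝ ≃o ℝ) where
  carrier := {h | ∃ g ∈ G, (fun _ => h, g) ∈ framewise S p q}
  one_mem' := ⟨1, one_mem G, one_mem _⟩
  mul_mem' := fun ⟨g, hg, hgS⟩ ⟨g', hg', hgS'⟩ => ⟨g * g', mul_mem hg hg', mul_mem hgS hgS'⟩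
  inv_mem' := fun ⟨g, hg, hgS⟩ => ⟨g⁻¹, inv_mem hg, inv_mem hgS⟩

/-- Every compactly supported dyadic homeomorphism of `(p, q)` is performed simultaneously in all
frames of `S` by some element of `G`. -/
def Realizes (G : Subgroup (ℝ ≃o ℝ)) (S : Set IntIsom) (p q : ℝ) : Prop :=
  dyadicPLIoo p q ≤ realized G S p q

namespace Realizes

variable {G : Subgroup (ℝ ≃o ℝ)} {S T : Set IntIsom} {p q p' q' : ℝ}

theorem of_exists (h : ∀ h ∈ dyadicPLIoo p q, ∃ g ∈ G, ActsInFrames S p q (fun _ => h) g) :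
    Realizes G S p q := fun f hf => by
  obtain ⟨g, hg, hgS⟩ := h f hf
  exact ⟨g, hg, fun _ _ => ⟨apply_eq_self_of_mem_dyadicPLIoo hf (by simp),
    apply_eq_self_of_mem_dyadicPLIoo hf (by simp)⟩, hgS⟩

theorem exists_actsInFrames (hS : Realizes G S p q) {h : ℝ ≃o ℝ} (hh : h ∈ dyadicPLIoo p q) :
    ∃ g ∈ G, ActsInFrames S p q (fun _ => h) g := by
  obtain ⟨g, hg, -, hgS⟩ := hS hh
  exact ⟨g, hg, hgS⟩

theorem restrict (hS : Realizes G S p q) (hp : p ≤ p') (hq : q' ≤ q) : Realizes G S p' q' :=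
  of_exists fun h hh => by
    obtain ⟨g, hg, hgS⟩ := hS.exists_actsInFrames (dyadicPLIoo_mono hp hq hh)
    exact ⟨g, hg, hgS.restrict hp hq fun _ => apply_eq_self_of_mem_dyadicPLIoo hh⟩

theorem preimage_mul_right (hS : Realizes G S p q) (k : IntIsom)
    (hk : k • ((p + q) / 2) = (p' + q') / 2) (hlen : q' - p' = q - p) :
    Realizes G ((· * k) ⁻¹' S) p' q' := of_exists fun h hh => by
  obtain ⟨g, hg, hgS⟩ := hS.exists_actsInFrames (k⁻¹.conj_mem_dyadicPLIoo hh
    (inv_smul_eq_iff.mpr hk.symm) hlen.symm)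
  refine ⟨g, hg, fun γ hγ x hx => ?_, fun y hy => hgS.apply_of_forall_ne y fun γ hγ x hx => ?_⟩
  · obtain ⟨z, rfl⟩ := MulAction.surjective k x
    have := hgS.apply_smul _ hγ z ((smul_mem_Ioo_iff hk hlen).mp hx)
    rwa [IntIsom.conj_apply, mul_smul, mul_smul, inv_inv, smul_inv_smul] at this
  · have := hy (γ * k⁻¹) (by simpa using hγ) (k • x) ((smul_mem_Ioo_iff hk hlen).mpr hx)
    rwa [mul_smul, inv_smul_smul] at this

/-- An element acting in all frames of `T`, hence in those of `S`, conjugates the support of a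
homeomorphism of `(p, q)` into `(p', q')`. -/
theorem spread (hT : Realizes G T p q) (hd : DisjointTranslates T p q) (hST : S ⊆ T)
    (hS : Realizes G S p' q') (hp : p ≤ p') (hpq : p' < q') (hq : q' ≤ q) :
    Realizes G S p q := of_exists fun h hh => by
  obtain ⟨t, ht, hconj⟩ := exists_conj_mem_dyadicPLIoo hh hp hpq hq
  have ht_p : t p = p := apply_eq_self_of_mem_dyadicPLIoo ht (by simp)
  have ht_q : t q = q := apply_eq_self_of_mem_dyadicPLIoo ht (by simp)
  obtain ⟨a, ha, haT⟩ := hT.exists_actsInFrames ht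
  obtain ⟨b, hb, hbS⟩ := hS.exists_actsInFrames hconj
  have hbS' := hbS.extend (hd.mono hST) hp hq
    fun _ => apply_eq_self_of_mem_dyadicPLIoo hconj
  refine ⟨a⁻¹ * b * a, mul_mem (mul_mem (inv_mem ha) hb) ha, fun γ hγ x hx => ?_, fun y hy => ?_⟩
  · rw [RelIso.mul_apply, RelIso.mul_apply, haT.apply_smul γ (hST hγ) x hx,
      hbS'.apply_smul γ hγ _ (apply_mem_Ioo ht_p ht_q hx), RelIso.mul_apply, RelIso.mul_apply,
      RelIso.inv_apply_self]
    have hhx : h x ∈ Set.Ioo p q := apply_mem_Ioo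
      (apply_eq_self_of_mem_dyadicPLIoo hh (by simp))
      (apply_eq_self_of_mem_dyadicPLIoo hh (by simp)) hx
    exact inv_apply_eq_of_apply_eq (haT.apply_smul γ (hST hγ) _ hhx)
  · rw [RelIso.mul_apply, RelIso.mul_apply, hbS'.apply_of_forall_ne, RelIso.inv_apply_self]
    intro γ hγ x hx heq
    refine hy γ hγ (t⁻¹ x) (apply_mem_Ioo (inv_apply_eq_of_apply_eq ht_p)
      (inv_apply_eq_of_apply_eq ht_q) hx) ?_
    have hinv : a⁻¹ (γ • x) = γ • t⁻¹ x :=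
      (haT.inv (fun _ _ => ht_p) fun _ _ => ht_q).apply_smul γ (hST hγ) x hx
    rw [← hinv, heq, RelIso.inv_apply_self]

open scoped commutatorElement in
/-- The commutator of an element acting in `S` and one acting in `T` is trivial in all frames
outside `S ∩ T`, and `dyadicPLIoo p q` is perfect. -/
theorem inter (hS : Realizes G S p q) (hT : Realizes G T p q)
    (hd : DisjointTranslates (S ∪ T) p q) : Realizes G (S ∩ T) p q := by
  rw [Realizes, ← commutator_dyadicPLIoo, Subgroup.commutator_le]
  intro h hh h' hh'
  obtain ⟨g, hg, hgS⟩ := hS hh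
  obtain ⟨g', hg', hgT⟩ := hT hh'
  rw [← mulIndicator_mem_framewise_iff hd Set.subset_union_left] at hgS
  rw [← mulIndicator_mem_framewise_iff hd Set.subset_union_right] at hgT
  refine ⟨⁅g, g'⁆, mul_mem (mul_mem (mul_mem hg hg') (inv_mem hg)) (inv_mem hg'), ?_⟩
  rw [← mulIndicator_mem_framewise_iff hd (Set.inter_subset_left.trans Set.subset_union_left)]
  convert mul_mem (mul_mem (mul_mem hgS hgT) (inv_mem hgS)) (inv_mem hgT) using 2
  · funext γ
    by_cases hγS : γ ∈ S <;> by_cases hγT : γ ∈ T <;> simp [hγS, hγT, commutatorElement_def]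
  · rfl

theorem union (hS : Realizes G S p q) (hT : Realizes G T p q)
    (hd : DisjointTranslates (S ∪ T) p q) : Realizes G (S ∪ T) p q := fun h hh => by
  obtain ⟨a, ha, haS⟩ := hS hh
  obtain ⟨b, hb, hbT⟩ := hT hh
  obtain ⟨c, hc, hcST⟩ := hS.inter hT hd hh
  rw [← mulIndicator_mem_framewise_iff hd Set.subset_union_left] at haS
  rw [← mulIndicator_mem_framewise_iff hd Set.subset_union_right] at hbT
  rw [← mulIndicator_mem_framewise_iff hd (Set.inter_subset_left.trans Set.subset_union_left)]
    at hcST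
  refine ⟨a * c⁻¹ * b, mul_mem (mul_mem ha (inv_mem hc)) hb, ?_⟩
  rw [← mulIndicator_mem_framewise_iff hd subset_rfl]
  convert mul_mem (mul_mem haS (inv_mem hcST)) hbT using 2
  · funext γ
    by_cases hγS : γ ∈ S <;> by_cases hγT : γ ∈ T <;> simp [hγS, hγT]
  · rfl

end Realizes

/-! ### Reading labels along frames -/

/-- The sign of the labelling `r` read at the half-integer `l / 2` through the frame `γ`: a frame
that reverses the orientation also inverts the letter. -/
def readLabel (r : ℤ → ℤˣ) (γ : IntIsom) (l : ℤ) : ℤˣ := γ.sign * r (γ • l)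

/-- The frames through which the label `x` is read at `l / 2`. -/
def labelSet (r : ℤ → ℤˣ) (l : ℤ) (x : ℤˣ) : Set IntIsom := {γ | readLabel r γ l = x}

section Labels

variable {r : ℤ → ℤˣ}

theorem readLabel_mul (γ κ : IntIsom) (l : ℤ) :
    readLabel r (γ * κ) l = κ.sign * readLabel r γ (κ • l) := by
  rw [readLabel, readLabel, IntIsom.sign_mul, mul_smul, mul_left_comm, mul_assoc]

theorem eq_of_readLabel_eq {γ γ' : IntIsom} {l : ℤ} (hr : readLabel r γ l = readLabel r γ' l)
    (hl : γ • l = γ' • l) : γ = γ' := by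
  rw [readLabel, readLabel, hl, mul_left_inj] at hr
  refine IntIsom.ext hr ?_
  rw [IntIsom.smul_int, IntIsom.smul_int, hr] at hl
  lia

theorem disjointTranslates_labelSet (e : ℤ) (x : ℤˣ) :
    DisjointTranslates (labelSet r e x) (((e : ℝ) - 1) / 2) (((e : ℝ) + 1) / 2) := by
  intro γ hγ γ' hγ' y hy y' hy' heq
  refine eq_of_readLabel_eq (hγ.trans hγ'.symm) ?_
  rw [mem_Ioo_iff_dist_lt] at hy hy'
  rw [← dist_smul γ, heq] at hy
  rw [← dist_smul γ'] at hy'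
  have hc : (((e : ℝ) - 1) / 2 + (e + 1) / 2) / 2 = e / 2 := by ring
  have hdist : dist (γ • ((e : ℝ) / 2)) (γ' • ((e : ℝ) / 2)) < 1 := by
    rw [hc] at hy hy'
    linarith [dist_triangle_left (γ • ((e : ℝ) / 2)) (γ' • ((e : ℝ) / 2)) (γ' • y')]
  rw [IntIsom.smul_half, IntIsom.smul_half, Real.dist_eq, ← sub_div, abs_div, abs_two,
    div_lt_one two_pos] at hdist
  have hlt : |γ • e - γ' • e| < 2 := by exact_mod_cast hdist
  rw [IntIsom.smul_int, IntIsom.smul_int] at hlt ⊢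
  rcases Int.units_eq_one_or γ.sign with h | h <;>
    rcases Int.units_eq_one_or γ'.sign with h' | h' <;>
    · simp only [h, h', Units.val_one, Units.val_neg] at hlt ⊢
      grind

theorem disjointTranslates_halfCell (S : Set IntIsom) (j : ℤ) :
    DisjointTranslates S ((j : ℝ) / 2) (((j : ℝ) + 1) / 2) := by
  intro γ _ γ' _ x hx x' hx' heq
  rw [← inv_smul_eq_iff, smul_smul] at heq
  rw [← inv_mul_eq_one, ← inv_eq_one, mul_inv_rev, inv_inv]
  generalize γ'⁻¹ * γ = κ at heq ⊢
  obtain ⟨hx_gt, hx_lt⟩ := hx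
  obtain ⟨hx_gt', hx_lt'⟩ := hx'
  rcases Int.units_eq_one_or κ.sign with h | h
  · rw [IntIsom.smul_real, h, Units.val_one, Int.cast_one, one_mul] at heq
    refine IntIsom.ext h (Int.abs_lt_one_iff.mp ?_)
    have : |(κ.shift : ℝ)| < 1 := abs_lt.mpr ⟨by linarith, by linarith⟩
    exact_mod_cast this
  · rw [IntIsom.smul_real, h, Units.val_neg, Units.val_one, Int.cast_neg, Int.cast_one,
      neg_one_mul] at heq
    have hgt : j < κ.shift := by exact_mod_cast (by linarith : (j : ℝ) < κ.shift)
    have hlt : κ.shift < j + 1 := by exact_mod_cast (by linarith : (κ.shift : ℝ) < j + 1)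
    lia

/-- The reflection in `e / 2`. -/
def IntIsom.flip (e : ℤ) : IntIsom := ⟨-1, e⟩

theorem IntIsom.flip_smul_real (e : ℤ) (x : ℝ) : IntIsom.flip e • x = e - x := by
  simp [IntIsom.smul_real, IntIsom.flip, sub_eq_neg_add]

theorem preimage_flip_labelSet (e : ℤ) (x : ℤˣ) :
    (· * IntIsom.flip e) ⁻¹' labelSet r e x = labelSet r e (-x) := by
  ext γ
  have he : IntIsom.flip e • e = e := by
    simp only [IntIsom.smul_int, IntIsom.flip, Units.val_neg, Units.val_one]
    ring
  change readLabel r (γ * IntIsom.flip e) e = x ↔ readLabel r γ e = -x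
  rw [readLabel_mul, he, IntIsom.flip, neg_one_mul, neg_eq_iff_eq_neg]

end Labels

/-- For every half-integer `e / 2`, the elements of `G` realize the compactly supported dyadic
homeomorphisms of the unit interval centred at `e / 2`, in all frames that read `1` there. -/
def RealizesBasic (G : Subgroup (ℝ ≃o ℝ)) (r : ℤ → ℤˣ) : Prop :=
  ∀ e : ℤ, Realizes G (labelSet r e 1) (((e : ℝ) - 1) / 2) (((e : ℝ) + 1) / 2)

/-- Every compactly supported dyadic homeomorphism of an interval of length `1 / 2` with
half-integer endpoints is performed in all frames of `S` by some element of `G`. -/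
def RealizesLocally (G : Subgroup (ℝ ≃o ℝ)) (S : Set IntIsom) : Prop :=
  ∀ j : ℤ, Realizes G S ((j : ℝ) / 2) (((j : ℝ) + 1) / 2)

section Realizes

variable {G : Subgroup (ℝ ≃o ℝ)} {r : ℤ → ℤˣ} {S T : Set IntIsom}

theorem RealizesBasic.realizes_labelSet (hG : RealizesBasic G r) (e : ℤ) (x : ℤˣ) :
    Realizes G (labelSet r e x) (((e : ℝ) - 1) / 2) (((e : ℝ) + 1) / 2) := by
  rcases Int.units_eq_one_or x with rfl | rfl
  · exact hG e
  · rw [← preimage_flip_labelSet]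
    exact (hG e).preimage_mul_right _ (by rw [IntIsom.flip_smul_real]; ring) rfl

theorem Realizes.cell (hG : RealizesBasic G r) {e : ℤ} {x : ℤˣ} (hSe : S ⊆ labelSet r e x)
    {p q : ℝ} (hS : Realizes G S p q) (hp : ((e : ℝ) - 1) / 2 ≤ p) (hpq : p < q)
    (hq : q ≤ ((e : ℝ) + 1) / 2) : Realizes G S (((e : ℝ) - 1) / 2) (((e : ℝ) + 1) / 2) :=
  (hG.realizes_labelSet e x).spread (disjointTranslates_labelSet e x) hSe hS hp hpq hq

theorem inter_labelSet_union_inter_labelSet (e : ℤ) :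
    S ∩ labelSet r e 1 ∪ S ∩ labelSet r e (-1) = S := by
  rw [← Set.inter_union_distrib_left, Set.inter_eq_left]
  exact fun γ _ => Int.units_eq_one_or (readLabel r γ e)

theorem Realizes.halfCell (hG : RealizesBasic G r) {e i j : ℤ} (hi : i = e - 1 ∨ i = e)
    (hj : j = e - 1 ∨ j = e) (hS : Realizes G S ((i : ℝ) / 2) (((i : ℝ) + 1) / 2)) :
    Realizes G S ((j : ℝ) / 2) (((j : ℝ) + 1) / 2) := by
  have hi' : (e - 1 : ℝ) ≤ i ∧ (i : ℝ) ≤ e := by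
    exact_mod_cast (by lia : e - 1 ≤ i ∧ i ≤ e)
  have hj' : (e - 1 : ℝ) ≤ j ∧ (j : ℝ) ≤ e := by
    exact_mod_cast (by lia : e - 1 ≤ j ∧ j ≤ e)
  have part (x : ℤˣ) :
      Realizes G (S ∩ labelSet r e x) ((j : ℝ) / 2) (((j : ℝ) + 1) / 2) := by
    refine .restrict (.cell hG Set.inter_subset_right (p := i / 2) (q := (i + 1) / 2)
      (hS.inter (.restrict (hG.realizes_labelSet e x) ?_ ?_) (disjointTranslates_halfCell _ i))
        ?_ ?_ ?_) ?_ ?_ <;> linarith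
  rw [← inter_labelSet_union_inter_labelSet (S := S) (r := r) e]
  exact (part 1).union (part (-1)) (disjointTranslates_halfCell _ j)

theorem Realizes.realizesLocally (hG : RealizesBasic G r) {i : ℤ}
    (hS : Realizes G S ((i : ℝ) / 2) (((i : ℝ) + 1) / 2)) : RealizesLocally G S := fun j => by
  induction j using Int.inductionOn' (b := i) with
  | zero => exact hS
  | succ k _ ih => exact ih.halfCell hG (e := k + 1) (by simp) (by simp)
  | pred k _ ih => exact ih.halfCell hG (e := k) (by simp) (by simp)

theorem RealizesLocally.inter (hS : RealizesLocally G S) (hT : RealizesLocally G T) :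
    RealizesLocally G (S ∩ T) :=
  fun j => (hS j).inter (hT j) (disjointTranslates_halfCell _ j)

theorem RealizesBasic.realizesLocally_labelSet (hG : RealizesBasic G r) (l : ℤ) (x : ℤˣ) :
    RealizesLocally G (labelSet r l x) :=
  .realizesLocally hG ((hG.realizes_labelSet l x).restrict (by linarith) le_rfl)

theorem RealizesBasic.realizesLocally_univ (hG : RealizesBasic G r) :
    RealizesLocally G Set.univ := fun j => by
  rw [← inter_labelSet_union_inter_labelSet (S := Set.univ) (r := r) 0, Set.univ_inter,
    Set.univ_inter]
  exact (hG.realizesLocally_labelSet 0 1 j).union (hG.realizesLocally_labelSet 0 (-1) j)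
    (disjointTranslates_halfCell _ j)

theorem RealizesLocally.realizes (hG : RealizesBasic G r) (hS : RealizesLocally G S) {m m' : ℝ}
    (hd : DisjointTranslates S m m')
    (hlabel : ∀ j : ℤ, (j : ℝ) / 2 ∈ Set.Ioo (m - 1 / 2) (m' + 1 / 2) →
      ∃ x, S ⊆ labelSet r j x) : Realizes G S m m' := by
  refine dyadicPLIoo_le_of_forall_cell fun j p q hp hq hpq hjp hjq h hh => ?_
  obtain ⟨x, hx⟩ := hlabel j ⟨by linarith, by linarith⟩
  have hcell := (hS j).cell hG hx (by linarith) (by linarith) le_rfl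
  obtain ⟨g, hg, hgS⟩ := (hcell.restrict hjp hjq).exists_actsInFrames hh
  have h_fix {y : ℝ} (hy : y ∉ Set.Ioo p q) : h y = y := apply_eq_self_of_mem_dyadicPLIoo hh hy
  exact ⟨g, hg, fun _ _ => ⟨h_fix (by simp [hp]), h_fix (by simp [hq])⟩,
    hgS.extend hd hp hq fun _ => h_fix⟩

end Realizes

section Cylinder

open Metric Pointwise

variable {r : ℤ → ℤˣ}

/-- The frames through which the labelling `r` looks unchanged on the half-integers in `s`. -/
def cylinder (r : ℤ → ℤˣ) (s : Set ℝ) : Set IntIsom :=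
  {γ | ∀ l : ℤ, (l : ℝ) / 2 ∈ s → readLabel r γ l = r l}

theorem cylinder_anti {s t : Set ℝ} (h : s ⊆ t) : cylinder r t ⊆ cylinder r s :=
  fun _ hγ l hl => hγ l (h hl)

theorem one_mem_cylinder (s : Set ℝ) : 1 ∈ cylinder r s := fun l _ => by
  rw [readLabel, one_smul, IntIsom.sign_one, one_mul]

theorem mul_mem_cylinder_iff {s : Set ℝ} {γ κ : IntIsom} (hγ : γ ∈ cylinder r s) :
    κ * γ ∈ cylinder r s ↔ κ ∈ cylinder r (γ • s) := by
  have key (l : ℤ) (hl : (l : ℝ) / 2 ∈ s) :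
      readLabel r (κ * γ) l = r l ↔ readLabel r κ (γ • l) = r (γ • l) := by
    rw [readLabel_mul, ← hγ l hl, readLabel, readLabel, mul_right_inj]
  constructor
  · intro h l hl
    rw [Set.mem_smul_set_iff_inv_smul_mem, IntIsom.smul_half] at hl
    simpa using (key _ hl).mp (h _ hl)
  · intro h l hl
    refine (key l hl).mpr (h _ ?_)
    rw [← IntIsom.smul_half]
    exact Set.smul_mem_smul_set hl

theorem mul_inv_mem_cylinder {s : Set ℝ} {τ τ' : IntIsom}
    (h : ∀ l : ℤ, (l : ℝ) / 2 ∈ s → readLabel r τ l = readLabel r τ' l) :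
    τ' * τ⁻¹ ∈ cylinder r (τ • s) := by
  intro l hl
  rw [Set.mem_smul_set_iff_inv_smul_mem, IntIsom.smul_half] at hl
  rw [readLabel_mul, ← h _ hl, readLabel, smul_inv_smul, ← mul_assoc, ← IntIsom.sign_mul,
    inv_mul_cancel, IntIsom.sign_one, one_mul]

theorem inv_mem_cylinder {s : Set ℝ} {γ : IntIsom} (hγ : γ ∈ cylinder r s) :
    γ⁻¹ ∈ cylinder r (γ • s) :=
  (mul_mem_cylinder_iff hγ).mp <| by simpa using one_mem_cylinder s

theorem cylinder_subset_labelSet {s : Set ℝ} {l : ℤ} (hl : (l : ℝ) / 2 ∈ s) :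
    cylinder r s ⊆ labelSet r l (r l) :=
  fun _ hγ => hγ l hl

theorem exists_forall_abs_le_of_isBounded {s : Set ℝ} (hs : Bornology.IsBounded s) :
    ∃ W : ℕ, ∀ l : ℤ, (l : ℝ) / 2 ∈ s → |l| ≤ W := by
  obtain ⟨R, hR⟩ := hs.subset_closedBall 0
  refine ⟨⌈2 * R⌉₊, fun l hl => ?_⟩
  have hlR := hR hl
  rw [mem_closedBall_zero_iff, Real.norm_eq_abs, abs_div, abs_two, div_le_iff₀' two_pos] at hlR
  exact_mod_cast hlR.trans (Nat.le_ceil _)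

theorem finite_setOf_half_mem {s : Set ℝ} (hs : Bornology.IsBounded s) :
    {l : ℤ | (l : ℝ) / 2 ∈ s}.Finite := by
  obtain ⟨W, hW⟩ := exists_forall_abs_le_of_isBounded hs
  exact (Set.finite_Icc (-(W : ℤ)) W).subset fun l hl => abs_le.mp (hW l hl)

theorem RealizesBasic.realizesLocally_cylinder {G : Subgroup (ℝ ≃o ℝ)} (hG : RealizesBasic G r)
    {s : Set ℝ} (hs : Bornology.IsBounded s) : RealizesLocally G (cylinder r s) := by
  suffices h : ∀ t : Set ℤ, t.Finite → RealizesLocally G {γ | ∀ l ∈ t, readLabel r γ l = r l} from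
    h _ (finite_setOf_half_mem hs)
  intro t ht
  induction t, ht using Set.Finite.induction_on with
  | empty => simpa using hG.realizesLocally_univ
  | @insert l t _ _ ih =>
    simp only [Set.forall_mem_insert]
    exact (hG.realizesLocally_labelSet l (r l)).inter ih

/-- The dyadic homeomorphisms at bounded distance from the identity that act near a point in a way
depending only on the labelling within a bounded distance of that point. -/
def localSubgroup (r : ℤ → ℤˣ) : Subgroup (ℝ ≃o ℝ) where
  carrier := {f | f ∈ dyadicPL ∧ ∃ R, (∀ x, dist (f x) x ≤ R) ∧
    ∀ γ x, γ ∈ cylinder r (closedBall x R) → f (γ • x) = γ • f x}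
  one_mem' := ⟨one_mem _, 0, fun x => (dist_self x).le, fun _ _ _ => rfl⟩
  mul_mem' := by
    rintro f g ⟨hf, R, hfR, f_comm⟩ ⟨hg, R', hgR', g_comm⟩
    have hR : 0 ≤ R := dist_nonneg.trans (hfR 0)
    refine ⟨mul_mem hf hg, R + R', fun x => ?_, fun γ x hγ => ?_⟩
    · exact (dist_triangle _ (g x) _).trans (add_le_add (hfR (g x)) (hgR' x))
    · rw [RelIso.mul_apply, g_comm γ x (cylinder_anti
        (closedBall_subset_closedBall (by linarith)) hγ)]
      exact f_comm γ _ (cylinder_anti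
        (closedBall_subset_closedBall' (add_le_add_right (hgR' x) R)) hγ)
  inv_mem' := by
    rintro f ⟨hf, R, hfR, f_comm⟩
    have hfR' (x : ℝ) : dist (f⁻¹ x) x ≤ R := by
      simpa [dist_comm] using hfR (f⁻¹ x)
    have hR : 0 ≤ R := dist_nonneg.trans (hfR 0)
    refine ⟨inv_mem hf, R + R, fun x => (hfR' x).trans (by linarith), fun γ x hγ => ?_⟩
    apply inv_apply_eq_of_apply_eq
    rw [f_comm γ _ (cylinder_anti
      (closedBall_subset_closedBall' (add_le_add_right (hfR' x) R)) hγ), RelIso.apply_inv_self]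

end Cylinder

/-! ### The generators of `G_ρ` -/

/-- The exponent `±1` of a letter. -/
def Letter.sign : Letter → ℤˣ
  | .a => 1
  | .b => 1
  | .A => -1
  | .B => -1

/-- Transport of a homeomorphism of `[0, 1]` to the unit interval centred at `e / 2`. -/
noncomputable def unitCopy (e : ℤ) : MulAut (ℝ ≃o ℝ) :=
  MulAut.conj (affineIso 0 (((e : ℝ) - 1) / 2))

theorem unitCopy_apply (e : ℤ) (ν : ℝ ≃o ℝ) (x : ℝ) :
    unitCopy e ν x = ν (x - ((e : ℝ) - 1) / 2) + ((e : ℝ) - 1) / 2 := by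
  have hinv : (affineIso 0 (((e : ℝ) - 1) / 2))⁻¹ x = x - ((e : ℝ) - 1) / 2 :=
    inv_apply_eq_of_apply_eq (by simp)
  rw [unitCopy, MulAut.conj_apply, RelIso.mul_apply, RelIso.mul_apply, hinv, affineIso_apply,
    zpow_zero, one_mul]

theorem affineIso_sub_one_div_two_mem_dyadicPL (e : ℤ) :
    affineIso 0 (((e : ℝ) - 1) / 2) ∈ dyadicPL :=
  affineIso_mem_dyadicPL 0 ⟨e - 1, 1, by simp⟩

theorem unitCopy_mem_dyadicPL (e : ℤ) {ν : ℝ ≃o ℝ} (hν : ν ∈ dyadicPL) :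
    unitCopy e ν ∈ dyadicPL :=
  mul_mem (mul_mem (affineIso_sub_one_div_two_mem_dyadicPL e) hν)
    (inv_mem (affineIso_sub_one_div_two_mem_dyadicPL e))

theorem InThompsonF.unitCopy_apply_eq_self {ν : ℝ ≃o ℝ} (hν : InThompsonF ν) {e : ℤ} {x : ℝ}
    (hx : x ∉ Set.Ioo (((e : ℝ) - 1) / 2) (((e : ℝ) + 1) / 2)) : unitCopy e ν x = x := by
  rw [unitCopy_apply, hν.apply_eq_self, sub_add_cancel]
  exact fun h => hx ⟨by linarith [h.1], by linarith [h.2]⟩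

theorem dyadicPLIoo_le_map_unitCopy (e : ℤ) : dyadicPLIoo (((e : ℝ) - 1) / 2) (((e : ℝ) + 1) / 2) ≤
    (dyadicPLIoo 0 1).map (unitCopy e).toMonoidHom := by
  intro f hf
  refine ⟨(unitCopy e)⁻¹ f, ?_, (unitCopy e).apply_symm_apply f⟩
  rw [unitCopy, ← map_inv]
  refine conj_mem_dyadicPLIoo hf (inv_mem (affineIso_sub_one_div_two_mem_dyadicPL e))
    (inv_apply_eq_of_apply_eq ?_).ge (inv_apply_eq_of_apply_eq ?_).le <;>
  · rw [affineIso_apply]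
    ring

section ActsOnCells

open Metric

variable {r : ℤ → ℤˣ} {e : ℤ} {u z : ℝ ≃o ℝ}

/-- `z` acts as `u` on the image of the unit interval centred at `e / 2` under each isometry
through which the label `1` is read at `e / 2`. -/
def ActsOnCells (r : ℤ → ℤˣ) (e : ℤ) (u z : ℝ ≃o ℝ) : Prop :=
  ∀ γ ∈ labelSet r e 1, ∀ x ∈ closedBall ((e : ℝ) / 2) (1 / 2), z (γ • x) = γ • u x

theorem exists_mem_labelSet_smul_eq (r : ℤ → ℤˣ) {e l : ℤ} (h : Even (l - e)) :
    ∃ γ ∈ labelSet r e 1, γ • e = l := by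
  obtain ⟨k, hk⟩ := h
  have hl (γ : IntIsom) (hγ : γ • e = l) (hs : γ.sign = r l) : γ ∈ labelSet r e 1 := by
    rw [labelSet, Set.mem_ofPred_eq, readLabel, hγ, hs, Int.units_mul_self]
  rcases Int.units_eq_one_or (r l) with hr | hr
  · have hγ : (⟨1, k⟩ : IntIsom) • e = l := by rw [IntIsom.smul_int, Units.val_one]; lia
    exact ⟨_, hl _ hγ hr.symm, hγ⟩
  · have hγ : (⟨-1, k + e⟩ : IntIsom) • e = l := by
      rw [IntIsom.smul_int, Units.val_neg, Units.val_one]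
      lia
    exact ⟨_, hl _ hγ hr.symm, hγ⟩

theorem inv_smul_mem_closedBall_half {γ : IntIsom} {l : ℤ} (hγ : γ • e = l) {y δ : ℝ}
    (hy : y ∈ closedBall ((l : ℝ) / 2) δ) : γ⁻¹ • y ∈ closedBall ((e : ℝ) / 2) δ := by
  rwa [mem_closedBall, ← dist_smul γ, smul_inv_smul, IntIsom.smul_half, hγ]

theorem exists_smul_mem_closedBall (r : ℤ → ℤˣ) (e : ℤ) (y : ℝ) :
    ∃ γ ∈ labelSet r e 1, ∃ x ∈ closedBall ((e : ℝ) / 2) (1 / 2), γ • x = y := by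
  obtain ⟨γ, hγ, hl⟩ := exists_mem_labelSet_smul_eq r (e := e) (l := e + 2 * round (y - e / 2))
    (by simp)
  have hround : y - ((e + 2 * round (y - (e : ℝ) / 2) : ℤ) : ℝ) / 2 =
      y - (e : ℝ) / 2 - round (y - (e : ℝ) / 2) := by
    push_cast
    ring
  refine ⟨γ, hγ, γ⁻¹ • y, inv_smul_mem_closedBall_half hl ?_, smul_inv_smul γ y⟩
  rw [mem_closedBall, Real.dist_eq, hround]
  exact abs_sub_round _

theorem Ioo_subset_closedBall_half (e : ℤ) :
    Set.Ioo (((e : ℝ) - 1) / 2) (((e : ℝ) + 1) / 2) ⊆ closedBall ((e : ℝ) / 2) (1 / 2) := by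
  rw [Real.Ioo_eq_ball]
  convert ball_subset_closedBall using 2 <;> ring

theorem apply_mem_closedBall_half
    (hu : ∀ x ∉ Set.Ioo (((e : ℝ) - 1) / 2) (((e : ℝ) + 1) / 2), u x = x) {x : ℝ}
    (hx : x ∈ closedBall ((e : ℝ) / 2) (1 / 2)) : u x ∈ closedBall ((e : ℝ) / 2) (1 / 2) := by
  by_contra h
  have hux : u x = x := u.injective (hu _ fun h' => h (Ioo_subset_closedBall_half e h'))
  exact h (by rwa [hux])

namespace ActsOnCells

theorem actsInFrames (h : ActsOnCells r e u z)
    (hu : ∀ x ∉ Set.Ioo (((e : ℝ) - 1) / 2) (((e : ℝ) + 1) / 2), u x = x) :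
    ActsInFrames (labelSet r e 1) (((e : ℝ) - 1) / 2) (((e : ℝ) + 1) / 2) (fun _ => u) z where
  apply_smul γ hγ x hx := h γ hγ x (Ioo_subset_closedBall_half e hx)
  apply_of_forall_ne y hy := by
    obtain ⟨γ, hγ, x, hx, rfl⟩ := exists_smul_mem_closedBall r e y
    rw [h γ hγ x hx, hu x fun hx' => hy γ hγ x hx' rfl]

theorem isMeshPL (h : ActsOnCells r e u z) {M : ℕ} (hu : IsMeshPL M u) : IsMeshPL (M + 1) z := by
  intro i
  obtain ⟨l, hl, hle⟩ : ∃ l, (l = i / 2 ^ M ∨ l = i / 2 ^ M + 1) ∧ Even (l - e) := by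
    rcases Int.even_or_odd (i / 2 ^ M - e) with he | he
    · exact ⟨_, .inl rfl, he⟩
    · exact ⟨_, .inr rfl, by simpa [add_sub_right_comm] using he.add_one⟩
  obtain ⟨γ, hγ, hγe⟩ := exists_mem_labelSet_smul_eq r hle
  obtain ⟨k, c, hk, hf⟩ := (γ.isMeshPL_conj hu).mono M.le_succ i
  refine ⟨k, c, hk, fun t ht => ?_⟩
  rw [← hf t ht, IntIsom.conj_apply, ← h γ hγ _ (inv_smul_mem_closedBall_half hγe ?_),
    smul_inv_smul]
  have hcell : 2 * t ∈ Set.Icc ((i / 2 ^ M : ℤ) : ℝ) ((i / 2 ^ M : ℤ) + 1) :=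
    mem_Icc_ediv (by positivity) (by convert ht using 1; push_cast; ring)
  rw [mem_closedBall, Real.dist_eq, abs_le]
  rcases hl with rfl | rfl <;> push_cast <;>
    constructor <;> linarith [hcell.1, hcell.2]

theorem mem_localSubgroup (h : ActsOnCells r e u z) (hu : u ∈ dyadicPL)
    (hu_fix : ∀ x ∉ Set.Ioo (((e : ℝ) - 1) / 2) (((e : ℝ) + 1) / 2), u x = x) :
    z ∈ localSubgroup r := by
  obtain ⟨M, hM⟩ := hu
  refine ⟨⟨M + 1, h.isMeshPL hM⟩, 1, fun y => ?_, fun κ y hκ => ?_⟩ <;>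
    obtain ⟨γ, hγ, x, hx, rfl⟩ := exists_smul_mem_closedBall r e y
  · rw [h γ hγ x hx, dist_smul]
    linarith [dist_triangle_right (u x) x ((e : ℝ) / 2),
      mem_closedBall.mp (apply_mem_closedBall_half hu_fix hx), mem_closedBall.mp hx]
  · have hκγ : κ * γ ∈ labelSet r e 1 := by
      have hmem : ((γ • e : ℤ) : ℝ) / 2 ∈ closedBall (γ • x) 1 := by
        rw [← IntIsom.smul_half, mem_closedBall, dist_smul, dist_comm]
        linarith [mem_closedBall.mp hx]
      rw [labelSet, Set.mem_ofPred_eq, readLabel_mul, hκ _ hmem]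
      exact hγ
    rw [h γ hγ x hx, smul_smul, h _ hκγ x hx, smul_smul]

end ActsOnCells

end ActsOnCells

section Generators

variable {ρ : ℤ → Letter} {e : ℤ}

theorem IsZeta.actsOnCells {ν ζ : ℝ ≃o ℝ} (h : IsZeta ρ ν ζ) (hρ : IsLabelling ρ) (he : Odd e) :
    ActsOnCells (fun l => (ρ l).sign) e (unitCopy e ν) ζ := by
  obtain ⟨m, rfl⟩ := he
  rintro ⟨s, c⟩ (hγ : s * (ρ (s * (2 * m + 1) + 2 * c)).sign = 1) x hx
  rw [Metric.mem_closedBall, Real.dist_eq, abs_le] at hx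
  push_cast at hx
  rw [IntIsom.smul_real, IntIsom.smul_real, unitCopy_apply]
  rcases Int.units_eq_one_or s with rfl | rfl
  · rw [show (1 : ℤˣ) * (2 * m + 1) + 2 * c = 2 * (m + c) + 1 by push_cast; ring] at hγ
    have hb : ρ (2 * (m + c) + 1) = .b := ((hρ _).2 (by simp)).resolve_right fun hB => by
      simp [hB, Letter.sign] at hγ
    rw [(h (m + c) _ ⟨by push_cast; linarith, by push_cast; linarith⟩).1 hb]
    push_cast
    ring_nf
  · rw [show (-1 : ℤˣ) * (2 * m + 1) + 2 * c = 2 * (c - m - 1) + 1 by push_cast; ring] at hγ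
    have hB : ρ (2 * (c - m - 1) + 1) = .B := ((hρ _).2 (by simp)).resolve_left fun hb => by
      simp [hb, Letter.sign] at hγ
    rw [(h (c - m - 1) _ ⟨by push_cast; linarith, by push_cast; linarith⟩).2 hB]
    push_cast
    ring_nf

theorem IsChi.actsOnCells {ν χ : ℝ ≃o ℝ} (h : IsChi ρ ν χ) (hρ : IsLabelling ρ) (he : Even e) :
    ActsOnCells (fun l => (ρ l).sign) e (unitCopy e ν) χ := by
  obtain ⟨m, rfl⟩ := he.two_dvd
  rintro ⟨s, c⟩ (hγ : s * (ρ (s * (2 * m) + 2 * c)).sign = 1) x hx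
  rw [Metric.mem_closedBall, Real.dist_eq, abs_le] at hx
  push_cast at hx
  rw [IntIsom.smul_real, IntIsom.smul_real, unitCopy_apply]
  rcases Int.units_eq_one_or s with rfl | rfl
  · rw [show (1 : ℤˣ) * (2 * m) + 2 * c = 2 * (m + c) by push_cast; ring] at hγ
    have ha : ρ (2 * (m + c)) = .a := ((hρ _).1 (by simp)).resolve_right fun hA => by
      simp [hA, Letter.sign] at hγ
    rw [(h (m + c) _ ⟨by push_cast; linarith, by push_cast; linarith⟩).1 ha]
    push_cast
    ring_nf
  · rw [show (-1 : ℤˣ) * (2 * m) + 2 * c = 2 * (c - m) by push_cast; ring] at hγ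
    have hA : ρ (2 * (c - m)) = .A := ((hρ _).1 (by simp)).resolve_left fun ha => by
      simp [ha, Letter.sign] at hγ
    rw [(h (c - m) _ ⟨by push_cast; linarith, by push_cast; linarith⟩).2 hA]
    push_cast
    ring_nf

variable {ι : Type*} {ν ζ χ : ι → (ℝ ≃o ℝ)}

theorem realizesBasic_closure (hρ : IsLabelling ρ) (hν : ∀ i, InThompsonF (ν i))
    (hν_le : dyadicPLIoo 0 1 ≤ Subgroup.closure (Set.range ν)) (hζ : ∀ i, IsZeta ρ (ν i) (ζ i))
    (hχ : ∀ i, IsChi ρ (ν i) (χ i)) :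
    RealizesBasic (Subgroup.closure (Set.range ζ ∪ Set.range χ)) fun l => (ρ l).sign := by
  intro e
  refine (dyadicPLIoo_le_map_unitCopy e).trans ((Subgroup.map_mono hν_le).trans ?_)
  rw [Subgroup.map_le_iff_le_comap, Subgroup.closure_le]
  rintro _ ⟨i, rfl⟩
  obtain ⟨z, hz, hzν⟩ : ∃ z ∈ Set.range ζ ∪ Set.range χ,
      ActsOnCells (fun l => (ρ l).sign) e (unitCopy e (ν i)) z := by
    rcases Int.even_or_odd e with he | he
    · exact ⟨χ i, .inr ⟨i, rfl⟩, (hχ i).actsOnCells hρ he⟩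
    · exact ⟨ζ i, .inl ⟨i, rfl⟩, (hζ i).actsOnCells hρ he⟩
  exact ⟨z, Subgroup.subset_closure hz, fun _ _ => ⟨(hν i).unitCopy_apply_eq_self (by simp),
    (hν i).unitCopy_apply_eq_self (by simp)⟩,
    hzν.actsInFrames fun _ => (hν i).unitCopy_apply_eq_self⟩

theorem closure_le_localSubgroup (hρ : IsLabelling ρ) (hν : ∀ i, InThompsonF (ν i))
    (hζ : ∀ i, IsZeta ρ (ν i) (ζ i)) (hχ : ∀ i, IsChi ρ (ν i) (χ i)) :
    Subgroup.closure (Set.range ζ ∪ Set.range χ) ≤ localSubgroup fun l => (ρ l).sign := by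
  rw [Subgroup.closure_le]
  rintro _ (⟨i, rfl⟩ | ⟨i, rfl⟩)
  · exact ((hζ i).actsOnCells hρ odd_one).mem_localSubgroup
      (unitCopy_mem_dyadicPL 1 (hν i).mem_dyadicPL) fun _ => (hν i).unitCopy_apply_eq_self
  · exact ((hχ i).actsOnCells hρ Even.zero).mem_localSubgroup
      (unitCopy_mem_dyadicPL 0 (hν i).mem_dyadicPL) fun _ => (hν i).unitCopy_apply_eq_self

end Generators

/-! ### Recurrence of the labelling -/

/-- Recurrence of a labelling by signs: every finite pattern reappears, translated by an integer, in
every sufficiently long interval. -/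
def IsRecurrent (r : ℤ → ℤˣ) : Prop :=
  ∀ s : Set ℝ, Bornology.IsBounded s → ∃ L : ℝ, ∀ y : ℝ, ∃ c : ℤ,
    (c : ℝ) ∈ Set.Icc y (y + L) ∧ (⟨1, c⟩ : IntIsom) ∈ cylinder r s

theorem blockWord_eq_map (ρ : ℤ → Letter) (k : ℤ) (n : ℕ) :
    blockWord ρ k n = (List.range (n + 1)).map fun i : ℕ => ρ (k + i) := by
  simp [blockWord, ← List.map_eq_flatMap]

theorem exists_forall_eq_of_blockWord_infix {ρ : ℤ → Letter} {k k' : ℤ} {n n' : ℕ}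
    (h : blockWord ρ k n <:+: blockWord ρ k' n') :
    ∃ j : ℕ, j + n ≤ n' ∧ ∀ i : ℕ, i ≤ n → ρ (k + i) = ρ (k' + j + i) := by
  obtain ⟨j, hj, hget⟩ := List.infix_iff_getElem?.mp h
  simp only [blockWord_eq_map, List.length_map, List.length_range] at hj hget
  refine ⟨j, by lia, fun i hi => ?_⟩
  have hget_i := hget i (by lia)
  rw [List.getElem?_eq_getElem (by simp; lia), List.getElem_map, List.getElem_map,
    List.getElem_range, List.getElem_range, Option.some_inj] at hget_i
  rw [← hget_i]
  congr 1
  push_cast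
  ring

theorem IsLabelling.even_iff {ρ : ℤ → Letter} (hρ : IsLabelling ρ) {m : ℤ} :
    Even m ↔ ρ m = .a ∨ ρ m = .A := by
  refine ⟨(hρ m).1, fun h => ?_⟩
  by_contra hm
  rcases (hρ m).2 (Int.not_even_iff_odd.mp hm) with hb | hb <;> simp [hb] at h

theorem isRecurrent_sign {ρ : ℤ → Letter} (hρ : IsLabelling ρ)
    (hrec : ∀ (k : ℤ) (n : ℕ), ∃ N : ℕ, ∀ (k' : ℤ) (n' : ℕ), N ≤ n' + 1 →
      (blockWord ρ k n) <:+: (blockWord ρ k' n')) : IsRecurrent fun l => (ρ l).sign := by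
  intro s hs
  obtain ⟨W, hW⟩ := exists_forall_abs_le_of_isBounded hs
  obtain ⟨N, hN⟩ := hrec (-W) (2 * W)
  refine ⟨N + 1, fun y => ?_⟩
  obtain ⟨j, hj, hword⟩ := exists_forall_eq_of_blockWord_infix (hN (2 * ⌈y⌉) N N.le_succ)
  have hshift (l : ℤ) (hl : |l| ≤ W) : ρ l = ρ (2 * ⌈y⌉ + j + W + l) := by
    have hl' := abs_le.mp hl
    have hi := hword (l + W).toNat (by lia)
    rw [Int.toNat_of_nonneg (by lia)] at hi
    convert hi using 2 <;> ring
  -- The letters at integers and at proper half-integers differ, so the shift is by an integer.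
  obtain ⟨c, hc⟩ : Even (2 * ⌈y⌉ + j + W : ℤ) := by
    have h0 := hshift 0 (by simp)
    rw [add_zero] at h0
    rw [hρ.even_iff, ← h0, ← hρ.even_iff]
    exact Even.zero
  have hle : ⌈y⌉ ≤ c ∧ c ≤ ⌈y⌉ + N := by lia
  have hle' : ((⌈y⌉ : ℝ) ≤ c) ∧ (c : ℝ) ≤ ⌈y⌉ + N := by exact_mod_cast hle
  refine ⟨c, ⟨(Int.le_ceil y).trans hle'.1, by linarith [Int.ceil_lt_add_one y]⟩, fun l hl => ?_⟩
  rw [readLabel, one_mul, IntIsom.smul_int, Units.val_one, one_mul]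
  have hl_eq := hshift l (hW l hl)
  rw [hc, ← two_mul, add_comm] at hl_eq
  exact congrArg Letter.sign hl_eq.symm

/-! ### Gaps between markers -/

section Gaps

open Metric Pointwise

/-- The ball with centre `u` and radius `ℓ` is a component of the complement of `M`. -/
structure IsGap (M : Set ℝ) (u ℓ : ℝ) : Prop where
  pos : 0 < ℓ
  sphere_subset : sphere u ℓ ⊆ M
  disjoint_ball : Disjoint (ball u ℓ) M

namespace IsGap

variable {M : Set ℝ} {u u' ℓ ℓ' y : ℝ}

theorem sub_mem (h : IsGap M u ℓ) : u - ℓ ∈ M :=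
  h.sphere_subset <| by simp [abs_of_pos h.pos]

theorem add_mem (h : IsGap M u ℓ) : u + ℓ ∈ M :=
  h.sphere_subset <| by simp [abs_of_pos h.pos]

theorem sub_le_sub_and_add_le_add (h : IsGap M u ℓ) (h' : IsGap M u' ℓ') (hy : y ∈ ball u ℓ)
    (hy' : y ∈ ball u' ℓ') : u' - ℓ' ≤ u - ℓ ∧ u + ℓ ≤ u' + ℓ' := by
  rw [Real.ball_eq_Ioo] at hy hy'
  constructor <;> by_contra! hlt
  · refine h.disjoint_ball.notMem_of_mem_right h'.sub_mem ?_
    rw [Real.ball_eq_Ioo]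
    exact ⟨hlt, hy'.1.trans hy.2⟩
  · refine h.disjoint_ball.notMem_of_mem_right h'.add_mem ?_
    rw [Real.ball_eq_Ioo]
    exact ⟨hy.1.trans hy'.2, hlt⟩

theorem unique (h : IsGap M u ℓ) (h' : IsGap M u' ℓ') (hy : y ∈ ball u ℓ) (hy' : y ∈ ball u' ℓ') :
    u = u' ∧ ℓ = ℓ' := by
  have hle := h.sub_le_sub_and_add_le_add h' hy hy'
  have hle' := h'.sub_le_sub_and_add_le_add h hy' hy
  constructor <;> linarith

theorem le_of_forall_nonempty {L : ℝ} (h : IsGap M u ℓ)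
    (hL : ∀ y, (M ∩ Set.Icc y (y + L)).Nonempty) : ℓ ≤ L := by
  by_contra! hlt
  obtain ⟨x, hxM, hx⟩ := hL u
  refine h.disjoint_ball.notMem_of_mem_right hxM ?_
  rw [Real.ball_eq_Ioo]
  exact ⟨by linarith [hx.1, h.pos], hx.2.trans_lt (by linarith)⟩

end IsGap

theorem exists_isGap {M : Set ℝ} {L : ℝ} (hM : ∀ a b, (M ∩ Set.Icc a b).Finite)
    (hL : ∀ y, (M ∩ Set.Icc y (y + L)).Nonempty) {y : ℝ} (hy : y ∉ M) :
    ∃ u ℓ, IsGap M u ℓ ∧ y ∈ ball u ℓ := by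
  have hne : (M ∩ Set.Icc (y - L) y).Nonempty := by simpa using hL (y - L)
  obtain ⟨m, ⟨hm, hLm, hmy⟩, hmax⟩ := Set.exists_max_image _ id (hM _ _) hne
  obtain ⟨m', ⟨hm', hym', hmL'⟩, hmin⟩ := Set.exists_min_image _ id (hM _ _) (hL y)
  have hmy := lt_of_le_of_ne hmy (ne_of_mem_of_not_mem hm hy)
  have hym' := lt_of_le_of_ne hym' (ne_of_mem_of_not_mem hm' hy).symm
  have hIoo : ball ((m + m') / 2) ((m' - m) / 2) = Set.Ioo m m' := by
    rw [Real.ball_eq_Ioo]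
    congr 1 <;> ring
  refine ⟨(m + m') / 2, (m' - m) / 2, ⟨by linarith, fun z hz => ?_, ?_⟩, ?_⟩
  · rw [mem_sphere, Real.dist_eq, abs_eq (by linarith)] at hz
    rcases hz with hz | hz
    · rwa [show z = m' by linarith]
    · rwa [show z = m by linarith]
  · rw [hIoo, Set.disjoint_right]
    intro z hz hzm
    rcases le_total z y with hzy | hyz
    · exact hzm.1.not_ge (hmax z ⟨hz, hLm.trans hzm.1.le, hzy⟩)
    · exact hzm.2.not_ge (hmin z ⟨hz, hyz, hzm.2.le.trans hmL'⟩)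
  · rw [hIoo]
    exact ⟨hmy, hym'⟩

end Gaps

section Markers

open Metric Pointwise

/-- The markers: the images of the base point `x₀` under the frames that preserve the labelling
within distance `W` of `x₀`. -/
def markers (r : ℤ → ℤˣ) (W x₀ : ℝ) : Set ℝ :=
  (· • x₀) '' cylinder r (closedBall x₀ W)

/-- The frames attached to the gap with centre `u` and radius `ℓ`: they preserve the labelling
within distance `W` of the gap, hence carry it to another gap. -/
def gapFrames (r : ℤ → ℤˣ) (W u ℓ : ℝ) : Set IntIsom :=
  cylinder r (closedBall u (ℓ + W))

variable {r : ℤ → ℤˣ} {W x₀ u u' ℓ ℓ' x x' y L : ℝ} {γ γ' : IntIsom}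

theorem markers_subset_orbit : markers r W x₀ ⊆ MulAction.orbit IntIsom x₀ := by
  rintro _ ⟨γ, -, rfl⟩
  exact MulAction.mem_orbit x₀ γ

theorem isDyadic_of_mem_markers (hx₀ : IsDyadic x₀) (hy : y ∈ markers r W x₀) : IsDyadic y := by
  obtain ⟨γ, -, rfl⟩ := hy
  exact IntIsom.isDyadic_smul γ hx₀

theorem smul_mem_markers (hγ : γ ∈ cylinder r (closedBall y W)) (hy : y ∈ markers r W x₀) :
    γ • y ∈ markers r W x₀ := by
  obtain ⟨κ, hκ, rfl⟩ := hy
  refine ⟨γ * κ, (mul_mem_cylinder_iff hκ).mpr ?_, mul_smul γ κ x₀⟩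
  simpa only [Metric.smul_closedBall] using hγ

theorem smul_mem_markers_iff (hγ : γ ∈ cylinder r (closedBall y W)) :
    γ • y ∈ markers r W x₀ ↔ y ∈ markers r W x₀ := by
  refine ⟨fun h => ?_, smul_mem_markers hγ⟩
  have hγ_inv := inv_mem_cylinder hγ
  rw [Metric.smul_closedBall] at hγ_inv
  simpa using smul_mem_markers hγ_inv h

theorem IsGap.smul (h : IsGap (markers r W x₀) u ℓ) (hγ : γ ∈ gapFrames r W u ℓ) :
    IsGap (markers r W x₀) (γ • u) ℓ := by
  have hmem {y : ℝ} (hy : y ∈ closedBall u ℓ) : γ • y ∈ markers r W x₀ ↔ y ∈ markers r W x₀ :=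
    smul_mem_markers_iff <| cylinder_anti
      (closedBall_subset_closedBall' (by linarith [mem_closedBall.mp hy])) hγ
  refine ⟨h.pos, ?_, ?_⟩
  · rw [← Metric.smul_sphere]
    rintro _ ⟨y, hy, rfl⟩
    exact (hmem (sphere_subset_closedBall hy)).mpr (h.sphere_subset hy)
  · rw [← Metric.smul_ball, Set.disjoint_left]
    rintro _ ⟨y, hy, rfl⟩ hyM
    exact h.disjoint_ball.notMem_of_mem_left hy ((hmem (ball_subset_closedBall hy)).mp hyM)

theorem IsGap.eq_of_smul_eq_smul (h : IsGap (markers r W x₀) u ℓ)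
    (h' : IsGap (markers r W x₀) u' ℓ') (hγ : γ ∈ gapFrames r W u ℓ)
    (hγ' : γ' ∈ gapFrames r W u' ℓ') (hx : x ∈ ball u ℓ) (hx' : x' ∈ ball u' ℓ')
    (heq : γ • x = γ' • x') : γ • u = γ' • u' ∧ ℓ = ℓ' := by
  refine (h.smul hγ).unique (h'.smul hγ') (y := γ • x) ?_ ?_
  · rwa [mem_ball, dist_smul]
  · rwa [heq, mem_ball, dist_smul]

theorem eq_of_mem_cylinder_of_smul_eq {s : Set ℝ} (hu : u ∈ s) (hγ : γ ∈ cylinder r s)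
    (hγ' : γ' ∈ cylinder r s) (heq : γ • u = γ' • u) : γ = γ' := by
  by_cases! hsign : γ.sign = γ'.sign
  · rw [IntIsom.smul_real, IntIsom.smul_real, hsign, add_right_inj, Int.cast_inj] at heq
    exact IntIsom.ext hsign heq
  -- Frames of opposite orientation agree only at half-integers, where a label can be read.
  · obtain ⟨l, rfl⟩ : ∃ l : ℤ, (l : ℝ) / 2 = u := by
      rw [IntIsom.smul_real, IntIsom.smul_real] at heq
      rcases Int.units_eq_one_or γ.sign with hs | hs <;>
        rcases Int.units_eq_one_or γ'.sign with hs' | hs' <;>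
        simp only [hs, hs', ne_eq, not_true_eq_false, Units.val_one, Units.val_neg, Int.cast_one,
          Int.cast_neg] at hsign heq
      · exact ⟨γ'.shift - γ.shift, by push_cast; linarith⟩
      · exact ⟨γ.shift - γ'.shift, by push_cast; linarith⟩
    rw [IntIsom.smul_half, IntIsom.smul_half, div_left_inj' two_ne_zero, Int.cast_inj] at heq
    exact eq_of_readLabel_eq ((hγ l hu).trans (hγ' l hu).symm) heq

theorem IsGap.realizes {G : Subgroup (ℝ ≃o ℝ)} (h : IsGap (markers r W x₀) u ℓ)
    (hG : RealizesBasic G r) (hW : 1 / 2 ≤ W) :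
    Realizes G (gapFrames r W u ℓ) (u - ℓ) (u + ℓ) := by
  have hℓ := h.pos
  refine (hG.realizesLocally_cylinder isBounded_closedBall).realizes hG ?_ fun j hj => ?_
  · intro γ hγ γ' hγ' x hx x' hx' heq
    rw [← Real.ball_eq_Ioo] at hx hx'
    exact eq_of_mem_cylinder_of_smul_eq (mem_closedBall_self (by linarith)) hγ hγ'
      (h.eq_of_smul_eq_smul h hγ hγ' hx hx' heq).1
  · refine ⟨r j, cylinder_subset_labelSet ?_⟩
    rw [Real.closedBall_eq_Icc]
    exact ⟨by linarith [hj.1], by linarith [hj.2]⟩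

theorem finite_orbit_inter_Icc (x₀ a b : ℝ) :
    (MulAction.orbit IntIsom x₀ ∩ Set.Icc a b).Finite := by
  have hfin (s : ℤˣ) : ((fun c : ℤ => (s : ℤ) * x₀ + c) ''
      Set.Icc ⌈a - (s : ℤ) * x₀⌉ ⌊b - (s : ℤ) * x₀⌋).Finite := (Set.finite_Icc _ _).image _
  refine (Set.finite_iUnion hfin).subset ?_
  rintro _ ⟨⟨γ, rfl⟩, hγ⟩
  simp only [IntIsom.smul_real, Set.mem_Icc] at hγ
  exact Set.mem_iUnion.mpr ⟨γ.sign, γ.shift, ⟨Int.ceil_le.mpr (by linarith),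
    Int.le_floor.mpr (by linarith)⟩, (IntIsom.smul_real γ x₀).symm⟩

theorem IsRecurrent.exists_nonempty_markers (hr : IsRecurrent r) (W x₀ : ℝ) :
    ∃ L, ∀ y, (markers r W x₀ ∩ Set.Icc y (y + L)).Nonempty := by
  obtain ⟨L, hL⟩ := hr (closedBall x₀ W) isBounded_closedBall
  refine ⟨L, fun y => ?_⟩
  obtain ⟨c, hc, hcyl⟩ := hL (y - x₀)
  refine ⟨_, ⟨_, hcyl, rfl⟩, ?_⟩
  simp only [IntIsom.smul_real, Units.val_one, Int.cast_one, one_mul]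
  exact ⟨by linarith [hc.1], by linarith [hc.2]⟩

/-- The gaps of the set of markers, as pairs `(u, ℓ)` of a centre and a radius. -/
abbrev MarkerGap (r : ℤ → ℤˣ) (W x₀ : ℝ) : Type :=
  {K : ℝ × ℝ // IsGap (markers r W x₀) K.1 K.2}

namespace MarkerGap

/-- The frames attached to a gap. -/
abbrev frames (K : MarkerGap r W x₀) : Set IntIsom := gapFrames r W K.1.1 K.1.2

/-- The left endpoint of a gap. -/
abbrev left (K : MarkerGap r W x₀) : ℝ := K.1.1 - K.1.2

/-- The right endpoint of a gap. -/
abbrev right (K : MarkerGap r W x₀) : ℝ := K.1.1 + K.1.2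

end MarkerGap

/-- Two gaps are equivalent if a frame attached to the first carries it to the second. -/
def gapSetoid (r : ℤ → ℤˣ) (W x₀ : ℝ) : Setoid (MarkerGap r W x₀) where
  r K K' := ∃ γ ∈ K.frames, γ • K.1.1 = K'.1.1 ∧ K.1.2 = K'.1.2
  iseqv := by
    refine ⟨fun K => ⟨1, one_mem_cylinder _, one_smul _ _, rfl⟩, ?_, ?_⟩
    · rintro K K' ⟨γ, hγ, hu, hℓ⟩
      refine ⟨γ⁻¹, ?_, by rw [← hu, inv_smul_smul], hℓ.symm⟩
      rw [MarkerGap.frames, gapFrames, ← hu, ← hℓ, ← Metric.smul_closedBall]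
      exact inv_mem_cylinder hγ
    · rintro K K' K'' ⟨γ, hγ, hu, hℓ⟩ ⟨γ', hγ', hu', hℓ'⟩
      rw [MarkerGap.frames, gapFrames, ← hu, ← hℓ, ← Metric.smul_closedBall] at hγ'
      exact ⟨γ' * γ, (mul_mem_cylinder_iff hγ).mpr hγ', by rw [mul_smul, hu, hu'], hℓ.trans hℓ'⟩

theorem finite_setOf_fract_gap (hL : ∀ y, (markers r W x₀ ∩ Set.Icc y (y + L)).Nonempty) :
    {K : ℝ × ℝ | ∃ u, Int.fract u = K.1 ∧ IsGap (markers r W x₀) u K.2}.Finite := by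
  have hfin := finite_orbit_inter_Icc x₀ (-L) (L + 1)
  refine ((hfin.prod hfin).image fun m : ℝ × ℝ => ((m.1 + m.2) / 2, (m.2 - m.1) / 2)).subset ?_
  rintro ⟨_, ℓ⟩ ⟨u, rfl, h⟩
  dsimp only at h
  have hℓ := h.pos
  have hℓL := h.le_of_forall_nonempty hL
  have hfract_nonneg := Int.fract_nonneg u
  have hfract_lt := Int.fract_lt_one u
  have horbit {m : ℝ} (hm : m ∈ markers r W x₀) : m - ⌊u⌋ ∈ MulAction.orbit IntIsom x₀ := by
    have hshift : (⟨1, -⌊u⌋⟩ : IntIsom) • m = m - ⌊u⌋ := by simp [IntIsom.smul_real, sub_eq_add_neg]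
    rw [← hshift]
    exact MulAction.mem_orbit_of_mem_orbit _ (markers_subset_orbit hm)
  rw [← Int.self_sub_floor] at hfract_nonneg hfract_lt ⊢
  refine ⟨(u - ℓ - ⌊u⌋, u + ℓ - ⌊u⌋), ⟨⟨horbit h.sub_mem, ?_, ?_⟩, horbit h.add_mem, ?_, ?_⟩, ?_⟩
  · linarith
  · linarith
  · linarith
  · linarith
  · ext <;> dsimp only <;> ring

theorem finite_quotient_gapSetoid (hL : ∀ y, (markers r W x₀ ∩ Set.Icc y (y + L)).Nonempty) :
    Finite (Quotient (gapSetoid r W x₀)) := by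
  let B := 1 + L + W
  have hshapes := (finite_setOf_fract_gap hL).to_subtype
  have hwindow := (finite_setOf_half_mem (isBounded_closedBall (x := (0 : ℝ)) (r := B))).to_subtype
  let colour (K : MarkerGap r W x₀) :
      {K : ℝ × ℝ | ∃ u, Int.fract u = K.1 ∧ IsGap (markers r W x₀) u K.2} ×
        ({l : ℤ | (l : ℝ) / 2 ∈ closedBall 0 B} → ℤˣ) :=
    (⟨(Int.fract K.1.1, K.1.2), K.1.1, rfl, K.2⟩, fun l => readLabel r ⟨1, ⌊K.1.1⌋⟩ l)
  suffices hcolour : ∀ K K', colour K = colour K' → (gapSetoid r W x₀) K K' from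
    Finite.of_injective (fun q => colour q.out) fun _ _ h =>
      Quotient.out_equiv_out.mp (hcolour _ _ h)
  rintro ⟨⟨u, ℓ⟩, h⟩ ⟨⟨u', ℓ'⟩, h'⟩ heq
  simp only [colour, Prod.mk.injEq, Subtype.mk.injEq] at heq
  obtain ⟨⟨hfract, hℓ⟩, hlabel⟩ := heq
  have hfloor (v : ℝ) : (⟨1, ⌊v⌋⟩ : IntIsom) • Int.fract v = v := by simp [IntIsom.smul_real]
  refine ⟨⟨1, ⌊u'⌋⟩ * ⟨1, ⌊u⌋⟩⁻¹, cylinder_anti ?_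
    (mul_inv_mem_cylinder (s := closedBall 0 B) fun l hl => congrFun hlabel ⟨l, hl⟩), ?_, hℓ⟩
  · rw [Metric.smul_closedBall]
    refine closedBall_subset_closedBall' ?_
    dsimp only [B]
    have hdist : dist u ((⟨1, ⌊u⌋⟩ : IntIsom) • (0 : ℝ)) = Int.fract u := by
      nth_rw 1 [← hfloor u]
      rw [dist_smul, Real.dist_0_eq_abs, Int.abs_fract]
    linarith [h.le_of_forall_nonempty hL, Int.fract_lt_one u]
  · dsimp only
    nth_rw 2 [← hfloor u]
    rw [mul_smul, inv_smul_smul, hfract, hfloor]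

end Markers

section Tiles

open Pointwise Function

variable {ι : Type*}

/-- `g` acts as `h i` in every frame of `S i`, seen on the interval `(p i, q i)`, and trivially
outside the images of these intervals, the tiles. -/
structure ActsOnTiles (S : ι → Set IntIsom) (p q : ι → ℝ) (h : ∀ i, dyadicPLIoo (p i) (q i))
    (g : ℝ ≃o ℝ) : Prop where
  apply_smul : ∀ i, ∀ γ ∈ S i, ∀ x ∈ Set.Ioo (p i) (q i), g (γ • x) = γ • (h i : ℝ ≃o ℝ) x
  apply_of_forall_notMem : ∀ y, (∀ i, y ∉ S i • Set.Ioo (p i) (q i)) → g y = y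

variable {S : ι → Set IntIsom} {p q : ι → ℝ} {h h' : ∀ i, dyadicPLIoo (p i) (q i)} {g g' : ℝ ≃o ℝ}
  {G : Subgroup (ℝ ≃o ℝ)}

namespace ActsOnTiles

theorem unique (hg : ActsOnTiles S p q h g) (hg' : ActsOnTiles S p q h g') : g = g' := by
  ext y
  by_cases! hy : ∀ i, y ∉ S i • Set.Ioo (p i) (q i)
  · rw [hg.apply_of_forall_notMem y hy, hg'.apply_of_forall_notMem y hy]
  · obtain ⟨i, γ, hγ, x, hx, rfl⟩ := hy
    exact (hg.apply_smul i γ hγ x hx).trans (hg'.apply_smul i γ hγ x hx).symm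

theorem one : ActsOnTiles S p q 1 1 := ⟨fun _ _ _ _ _ => rfl, fun _ _ => rfl⟩

theorem mul (hg : ActsOnTiles S p q h g) (hg' : ActsOnTiles S p q h' g') :
    ActsOnTiles S p q (h * h') (g * g') where
  apply_smul i γ hγ x hx := by
    rw [RelIso.mul_apply, hg'.apply_smul i γ hγ x hx, hg.apply_smul i γ hγ]
    · rfl
    · exact apply_mem_Ioo (apply_eq_self_of_mem_dyadicPLIoo (h' i).2 (by simp))
        (apply_eq_self_of_mem_dyadicPLIoo (h' i).2 (by simp)) hx
  apply_of_forall_notMem y hy := by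
    rw [RelIso.mul_apply, hg'.apply_of_forall_notMem y hy, hg.apply_of_forall_notMem y hy]

theorem eq_of_one_mem (hg : ActsOnTiles S p q h g) (hg' : ActsOnTiles S p q h' g)
    (hS : ∀ i, 1 ∈ S i) : h = h' := by
  funext i
  ext x
  by_cases hx : x ∈ Set.Ioo (p i) (q i)
  · simpa using (hg.apply_smul i 1 (hS i) x hx).symm.trans (hg'.apply_smul i 1 (hS i) x hx)
  · rw [apply_eq_self_of_mem_dyadicPLIoo (h i).2 hx, apply_eq_self_of_mem_dyadicPLIoo (h' i).2 hx]

theorem mulSingle [DecidableEq ι] (hd : Pairwise (Disjoint on fun i => S i • Set.Ioo (p i) (q i)))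
    {i : ι} {f : dyadicPLIoo (p i) (q i)}
    (hg : ActsInFrames (S i) (p i) (q i) (fun _ => (f : ℝ ≃o ℝ)) g) :
    ActsOnTiles S p q (Pi.mulSingle i f) g where
  apply_smul j γ hγ x hx := by
    obtain rfl | hij := eq_or_ne j i
    · rw [Pi.mulSingle_eq_same]
      exact hg.apply_smul γ hγ x hx
    · rw [Pi.mulSingle_eq_of_ne hij]
      refine hg.apply_of_forall_ne _ fun γ' hγ' x' hx' heq => ?_
      exact (hd hij).notMem_of_mem_left (Set.smul_mem_smul hγ hx)
        (heq ▸ Set.smul_mem_smul hγ' hx')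
  apply_of_forall_notMem y hy := hg.apply_of_forall_ne y fun _ hγ _ hx heq =>
    hy i (heq ▸ Set.smul_mem_smul hγ hx)

end ActsOnTiles

theorem exists_mem_actsOnTiles [Finite ι]
    (hd : Pairwise (Disjoint on fun i => S i • Set.Ioo (p i) (q i)))
    (hG : ∀ i, Realizes G (S i) (p i) (q i)) (h : ∀ i, dyadicPLIoo (p i) (q i)) :
    ∃ g ∈ G, ActsOnTiles S p q h g := by
  classical
  let K : Submonoid (∀ i, dyadicPLIoo (p i) (q i)) :=
    { carrier := {h | ∃ g ∈ G, ActsOnTiles S p q h g}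
      one_mem' := ⟨1, one_mem G, .one⟩
      mul_mem' := fun ⟨g, hg, hgS⟩ ⟨g', hg', hgS'⟩ => ⟨g * g', mul_mem hg hg', hgS.mul hgS'⟩ }
  refine Submonoid.pi_mem_of_mulSingle_mem (H := K) h fun i => ?_
  obtain ⟨g, hg, hgS⟩ := (hG i).exists_actsInFrames (h i).2
  exact ⟨g, hg, .mulSingle hd hgS⟩

theorem exists_le_mulEquiv_pi_dyadicPLIoo [Finite ι]
    (hd : Pairwise (Disjoint on fun i => S i • Set.Ioo (p i) (q i))) (hS : ∀ i, 1 ∈ S i)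
    (hG : ∀ i, Realizes G (S i) (p i) (q i)) :
    ∃ A ≤ G, (∀ h g, ActsOnTiles S p q h g → g ∈ A) ∧
      Nonempty (A ≃* ∀ i, dyadicPLIoo (p i) (q i)) := by
  choose φ hφG hφ using exists_mem_actsOnTiles hd hG
  let Φ := MonoidHom.mk' φ fun h h' => (hφ (h * h')).unique ((hφ h).mul (hφ h'))
  have hΦ : Function.Injective Φ := fun h h' (heq : φ h = φ h') =>
    (hφ h).eq_of_one_mem (heq ▸ hφ h') hS
  refine ⟨Φ.range, ?_, fun h g hg => ⟨h, (hφ h).unique hg⟩, ⟨(Φ.ofInjective hΦ).symm⟩⟩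
  rintro _ ⟨h, rfl⟩
  exact hφG h

end Tiles

section Assembly

open Metric Pointwise Function

variable {r : ℤ → ℤˣ} {W x₀ y L R ε : ℝ} {f : ℝ ≃o ℝ}

theorem apply_eq_self_of_mem_markers
    (hR : ∀ (γ : IntIsom) x, γ ∈ cylinder r (closedBall x R) → f (γ • x) = γ • f x)
    (hRW : R + ε ≤ W) (hfix : ∀ x ∈ ball x₀ ε, f x = x) (hy : y ∈ markers r W x₀) :
    ∀ x ∈ ball y ε, f x = x := by
  obtain ⟨γ, hγ, rfl⟩ := hy
  dsimp only
  rw [← Metric.smul_ball]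
  rintro _ ⟨x, hx, rfl⟩
  dsimp only
  rw [hR γ x, hfix x hx]
  exact cylinder_anti (closedBall_subset_closedBall' (by linarith [mem_ball.mp hx])) hγ

theorem finite_markers_inter_Icc (a b : ℝ) : (markers r W x₀ ∩ Set.Icc a b).Finite :=
  (finite_orbit_inter_Icc x₀ a b).subset (Set.inter_subset_inter_left _ markers_subset_orbit)

theorem pairwise_disjoint_frames_smul_Ioo : Pairwise (Disjoint on
    fun i : Quotient (gapSetoid r W x₀) => i.out.frames • Set.Ioo i.out.left i.out.right) := by
  refine fun i j hij => Set.disjoint_left.mpr ?_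
  rintro _ ⟨γ, hγ, x, hx, rfl⟩ ⟨γ', hγ', x', hx', heq⟩
  rw [← Real.ball_eq_Ioo] at hx hx'
  obtain ⟨hu, hℓ⟩ := i.out.2.eq_of_smul_eq_smul j.out.2 hγ hγ' hx hx' heq.symm
  refine hij (Quotient.out_equiv_out.mp ⟨γ'⁻¹ * γ, (mul_mem_cylinder_iff hγ).mpr ?_, ?_, hℓ⟩)
  · rw [Metric.smul_closedBall, hu, hℓ, ← Metric.smul_closedBall]
    exact inv_mem_cylinder hγ'
  · rw [mul_smul, hu, inv_smul_smul]

theorem exists_mem_frames_smul_Ioo (hL : ∀ y, (markers r W x₀ ∩ Set.Icc y (y + L)).Nonempty)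
    (hy : y ∉ markers r W x₀) :
    ∃ i : Quotient (gapSetoid r W x₀), y ∈ i.out.frames • Set.Ioo i.out.left i.out.right := by
  obtain ⟨u, ℓ, h, hyu⟩ := exists_isGap finite_markers_inter_Icc hL hy
  obtain ⟨γ, hγ, hu, hℓ⟩ := Quotient.mk_out (s := gapSetoid r W x₀) ⟨(u, ℓ), h⟩
  refine ⟨_, γ, hγ, γ⁻¹ • y, ?_, smul_inv_smul γ y⟩
  rw [← Real.ball_eq_Ioo, ← Set.mem_smul_set_iff_inv_smul_mem, Metric.smul_ball, hu, hℓ]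
  exact hyu

theorem exists_actsOnTiles (hx₀ : IsDyadic x₀)
    (hL : ∀ y, (markers r W x₀ ∩ Set.Icc y (y + L)).Nonempty) (hf : f ∈ dyadicPL)
    (hR : ∀ (γ : IntIsom) x, γ ∈ cylinder r (closedBall x R) → f (γ • x) = γ • f x)
    (hε : 0 < ε) (hRW : R + ε ≤ W) (hfix : ∀ x ∈ ball x₀ ε, f x = x) :
    ∃ h, ActsOnTiles (fun i : Quotient (gapSetoid r W x₀) => i.out.frames)
      (fun i => i.out.left) (fun i => i.out.right) h f := by
  have hf_marker {y : ℝ} (hy : y ∈ markers r W x₀) := apply_eq_self_of_mem_markers hR hRW hfix hy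
  have hgap (i : Quotient (gapSetoid r W x₀)) :
      ∃ h ∈ dyadicPLIoo i.out.left i.out.right, Set.EqOn h f (Set.Icc i.out.left i.out.right) :=
    exists_mem_dyadicPLIoo_eqOn hf (isDyadic_of_mem_markers hx₀ i.out.2.sub_mem)
      (isDyadic_of_mem_markers hx₀ i.out.2.add_mem) (by linarith [i.out.2.pos]) hε
      (hf_marker i.out.2.sub_mem) (hf_marker i.out.2.add_mem)
  choose h hh hhf using hgap
  refine ⟨fun i => ⟨h i, hh i⟩, fun i γ hγ x hx => ?_, fun y hy => ?_⟩
  · dsimp only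
    rw [hhf i (Set.Ioo_subset_Icc_self hx)]
    refine hR γ x (cylinder_anti (closedBall_subset_closedBall' ?_) hγ)
    rw [← Real.ball_eq_Ioo, mem_ball] at hx
    linarith
  · refine hf_marker (not_not.mp fun hy' => ?_) y (mem_ball_self hε)
    obtain ⟨i, hi⟩ := exists_mem_frames_smul_Ioo hL hy'
    exact hy i hi

theorem exists_le_mulEquiv_pi_of_subset_localSubgroup {G : Subgroup (ℝ ≃o ℝ)}
    (hG : RealizesBasic G r) (hr : IsRecurrent r) {s : Set (ℝ ≃o ℝ)} (hs : s.Finite)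
    (hs_local : s ⊆ localSubgroup r) {a b : ℝ} (hab : a < b)
    (hfix : ∀ f ∈ s, ∀ x ∈ Set.Ioo a b, f x = x) :
    ∃ A ≤ G, s ⊆ A ∧ ∃ n : ℕ, Nonempty (A ≃* (Fin n → dyadicPLIoo 0 1)) := by
  obtain ⟨x₀, hx₀, hax₀, hx₀b⟩ := exists_isDyadic_between hab
  obtain ⟨ε, hε, hball⟩ := isOpen_iff.mp (isOpen_Ioo (a := a) (b := b)) x₀ ⟨hax₀, hx₀b⟩
  choose! R hR using fun f (hf : f ∈ s) => (hs_local hf).2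
  obtain ⟨B, hB⟩ := (hs.image R).bddAbove
  let W := max (1 / 2) (B + ε)
  obtain ⟨L, hL⟩ := hr.exists_nonempty_markers W x₀
  have := finite_quotient_gapSetoid hL
  obtain ⟨A, hAG, hA, ⟨φ⟩⟩ := exists_le_mulEquiv_pi_dyadicPLIoo
    (pairwise_disjoint_frames_smul_Ioo (r := r) (W := W) (x₀ := x₀))
    (fun _ => one_mem_cylinder _) fun i => i.out.2.realizes hG (le_max_left _ _)
  refine ⟨A, hAG, fun f hf => ?_, Nat.card (Quotient (gapSetoid r W x₀)), ?_⟩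
  · have hRW : R f + ε ≤ W :=
      (add_le_add_left (hB (Set.mem_image_of_mem R hf)) ε).trans (le_max_right _ _)
    obtain ⟨h, hh⟩ := exists_actsOnTiles hx₀ hL (hs_local hf).1 (hR f hf).2 hε hRW
      fun x hx => hfix f hf x (hball hx)
    exact hA h f hh
  · have e (i : Quotient (gapSetoid r W x₀)) :
        Nonempty (dyadicPLIoo i.out.left i.out.right ≃* dyadicPLIoo 0 1) :=
      nonempty_mulEquiv_dyadicPLIoo (isDyadic_of_mem_markers hx₀ i.out.2.sub_mem)
        (isDyadic_of_mem_markers hx₀ i.out.2.add_mem) .zero .one (by linarith [i.out.2.pos])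
        one_pos
    exact ⟨(φ.trans (MulEquiv.piCongrRight fun i => (e i).some)).trans
      (MulEquiv.arrowCongr (Finite.equivFin _) (MulEquiv.refl _))⟩

end Assembly

theorem interval_fixing_pair_in_copies_of_Fprime_general
    {F : Subgroup (ℝ ≃o ℝ)} (hF : ∀ f : ℝ ≃o ℝ, f ∈ F ↔ InThompsonF f)
    {ρ : ℤ → Letter} (hρ : IsLabelling ρ)
    (hrec : ∀ (k : ℤ) (n : ℕ), ∃ N : ℕ, ∀ (k' : ℤ) (n' : ℕ), N ≤ n' + 1 →
      (blockWord ρ k n) <:+: (blockWord ρ k' n'))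
    {ι : Type*} {ν ζ χ : ι → (ℝ ≃o ℝ)} (hν : ∀ i, InThompsonF (ν i))
    (hν_le : (commutator F).map F.subtype ≤ Subgroup.closure (Set.range ν))
    (hζ : ∀ i, IsZeta ρ (ν i) (ζ i)) (hχ : ∀ i, IsChi ρ (ν i) (χ i))
    {s : Set (ℝ ≃o ℝ)} (hs : s.Finite)
    (hsG : s ⊆ Subgroup.closure (Set.range ζ ∪ Set.range χ)) {a b : ℝ} (hab : a < b)
    (hfix : ∀ f ∈ s, ∀ x ∈ Set.Ioo a b, f x = x) :
    ∃ A ≤ Subgroup.closure (Set.range ζ ∪ Set.range χ), s ⊆ A ∧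
      ∃ n : ℕ, Nonempty (A ≃* (Fin n → (commutator F).map F.subtype)) := by
  rw [map_commutator_eq_dyadicPLIoo hF] at hν_le ⊢
  exact exists_le_mulEquiv_pi_of_subset_localSubgroup (realizesBasic_closure hρ hν hν_le hζ hχ)
    (isRecurrent_sign hρ hrec) hs (hsG.trans (closure_le_localSubgroup hρ hν hζ hχ)) hab hfix

/-- If `f, g ∈ G_ρ` both pointwise fix a nonempty open interval, then
they are contained in a common subgroup `A ≤ G_ρ` isomorphic to a direct sum of finitely
many copies of `F'`, the commutator subgroup of Thompson's group `F`. -/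
theorem interval_fixing_pair_in_copies_of_Fprime
    (F : Subgroup (ℝ ≃o ℝ)) (hF : ∀ f : ℝ ≃o ℝ, f ∈ F ↔ InThompsonF f)
    (ρ : ℤ → Letter) (hρ : IsQuasiPeriodic ρ)
    (H : Subgroup (ℝ ≃o ℝ)) (hH : ∀ f : ℝ ≃o ℝ, f ∈ H ↔ InH f)
    (ν₁ ν₂ ν₃ : ℝ ≃o ℝ) (hgen : Subgroup.closure {ν₁, ν₂, ν₃} = H)
    (ζ₁ ζ₂ ζ₃ χ₁ χ₂ χ₃ : ℝ ≃o ℝ)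
    (hζ₁ : IsZeta ρ ν₁ ζ₁) (hζ₂ : IsZeta ρ ν₂ ζ₂) (hζ₃ : IsZeta ρ ν₃ ζ₃)
    (hχ₁ : IsChi ρ ν₁ χ₁) (hχ₂ : IsChi ρ ν₂ χ₂) (hχ₃ : IsChi ρ ν₃ χ₃)
    (G : Subgroup (ℝ ≃o ℝ))
    (hG : G = Subgroup.closure {ζ₁, ζ₂, ζ₃, χ₁, χ₂, χ₃})
    (f g : ℝ ≃o ℝ) (hf : f ∈ G) (hg : g ∈ G)
    (hfix : ∃ a b : ℝ, a < b ∧ ∀ x ∈ Set.Ioo a b, f x = x ∧ g x = x) :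
    ∃ A : Subgroup (ℝ ≃o ℝ), A ≤ G ∧ f ∈ A ∧ g ∈ A ∧
      ∃ n : ℕ, Nonempty (↥A ≃* (Fin n → ↥((commutator ↥F).map F.subtype))) := by
  obtain ⟨a, b, hab, hfix⟩ := hfix
  have range_triple (x y z : ℝ ≃o ℝ) : Set.range ![x, y, z] = {x, y, z} := by
    rw [Matrix.range_cons, Matrix.range_cons_cons_empty, Set.singleton_union]
  have hν : ∀ i, InThompsonF (![ν₁, ν₂, ν₃] i) := fun i =>
    ((hH _).mp (hgen ▸ range_triple ν₁ ν₂ ν₃ ▸ Subgroup.subset_closure (Set.mem_range_self i))).1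
  have hν_le : (commutator F).map F.subtype ≤ Subgroup.closure (Set.range ![ν₁, ν₂, ν₃]) := by
    rw [map_commutator_eq_dyadicPLIoo hF, range_triple, hgen]
    exact fun h hh => (hH h).mpr (inH_of_mem_dyadicPLIoo hh)
  have hG' : G = Subgroup.closure (Set.range ![ζ₁, ζ₂, ζ₃] ∪ Set.range ![χ₁, χ₂, χ₃]) := by
    simp only [hG, range_triple, Set.insert_union, Set.singleton_union]
  subst hG'
  obtain ⟨A, hAG, hA, n, hn⟩ := interval_fixing_pair_in_copies_of_Fprime_general hF hρ.1 hρ.2.1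
    hν hν_le (by simp [Fin.forall_fin_succ, *]) (by simp [Fin.forall_fin_succ, *])
    (Set.toFinite {f, g}) (Set.pair_subset hf hg) hab (by simp_all)
  exact ⟨A, hAG, hA (by simp), hA (by simp), n, hn⟩
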